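/- Step soundness of RKNL: if k is a reachable configuration of RKNL and k → k', then ⟦k⟧ reduces to a term α-equivalent to ⟦k'⟧ by zero or more normal-order β-steps (⟦k⟧ →*_no =_α ⟦k'⟧); consequently, if the machine started from term t₀ halts with output term t, then t₀ →*_no t' for some t' =_α t with t in β-normal form. -/

import Mathlib

set_option autoImplicit false
set_option maxHeartbeats 1000000

namespace RKNL

/- Pure lambda terms over a type of variables. -/
inductive Tm (V : Type) : Type
  | var : V → Tm V
  | app : Tm V → Tm V → Tm V
  | lam : V → Tm V → Tm V
  deriving DecidableEq

abbrev Ident : Type := ℕ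
abbrev Loc : Type := ℕ

/-- Lookup in an association list (first match). -/
def lookupL {β : Type} : List (ℕ × β) → ℕ → Option β
  | [], _ => none
  | (a, b) :: l, x => if x = a then some b else lookupL l x

/-- Update of an association list. -/
def updL {β : Type} (l : List (ℕ × β)) (x : ℕ) (b : β) : List (ℕ × β) :=
  l.map fun p => if p.1 = x then (x, b) else p

/-- Environments map identifiers to store locations. -/
abbrev Env : Type := List (Ident × Loc)

/-- Closures pair a term with an environment. -/
abbrev Closure : Type := Tm Ident × Env

/-- Values: terms (normal forms), or abstraction closures annotated with a location. -/
inductive Value : Type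
  | tm : Tm Ident → Value
  | abs : Ident → Tm Ident → Env → Loc → Value
  deriving DecidableEq

/-- Storable values (memothunks):
`pend x t e` is the `todo ⊥` placeholder allocated for the abstraction `(λx.t, e)`,
`todo c` an unevaluated argument thunk, `done v` a memoized value. -/
inductive Storable : Type
  | pend : Ident → Tm Ident → Env → Storable
  | todo : Closure → Storable
  | done : Value → Storable
  deriving DecidableEq

/-- Stores map locations to storable values. -/
abbrev Store : Type := List (Loc × Storable)

/-- Stack frames: `arg c` is `(□ c)`, `appL t` is `(t □)`, `lamF x` is `λx.□`,
`cache ℓ` is `ℓ := □`. -/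
inductive Frame : Type
  | arg : Closure → Frame
  | appL : Tm Ident → Frame
  | lamF : Ident → Frame
  | cache : Loc → Frame
  deriving DecidableEq

abbrev Stack : Type := List Frame

/-- Machine configurations: evaluation mode `⟨c, s, σ⟩▸` and continue mode `⟨σ, v, s⟩◂`. -/
inductive Conf : Type
  | eval : Closure → Stack → Store → Conf
  | cont : Store → Value → Stack → Conf

/-- The initial configuration loading a term. -/
def Conf.init (t : Tm Ident) : Conf := .eval (t, []) [] []

def Conf.store : Conf → Store
  | .eval _ _ σ => σ
  | .cont σ _ _ => σ

def Conf.stack : Conf → Stack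
  | .eval _ s _ => s
  | .cont _ _ s => s

/- Identifiers occurring in a configuration (used for freshness of generated names). -/
def tmVars : Tm Ident → List Ident
  | .var x => [x]
  | .app a b => tmVars a ++ tmVars b
  | .lam x t => x :: tmVars t

def envVars (e : Env) : List Ident := e.map Prod.fst

def valVars : Value → List Ident
  | .tm t => tmVars t
  | .abs x t e _ => x :: (tmVars t ++ envVars e)

def storableVars : Storable → List Ident
  | .pend x t e => x :: (tmVars t ++ envVars e)
  | .todo c => tmVars c.1 ++ envVars c.2
  | .done v => valVars v

def frameVars : Frame → List Ident
  | .arg c => tmVars c.1 ++ envVars c.2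
  | .appL t => tmVars t
  | .lamF x => [x]
  | .cache _ => []

def stackVars (s : Stack) : List Ident := s.foldr (fun f acc => frameVars f ++ acc) []

def storeVars (σ : Store) : List Ident := σ.foldr (fun p acc => storableVars p.2 ++ acc) []

def confVars : Conf → List Ident
  | .eval c s σ => tmVars c.1 ++ envVars c.2 ++ stackVars s ++ storeVars σ
  | .cont σ v s => valVars v ++ stackVars s ++ storeVars σ

/-- The top of the stack is not an argument frame. -/
def Stack.noArgTop : Stack → Prop
  | Frame.arg _ :: _ => False
  | _ => True

/-- The top of the stack is not a memoization frame. -/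
def Stack.noCacheTop : Stack → Prop
  | Frame.cache _ :: _ => False
  | _ => True

/-- The eleven transitions of the RKNL abstract machine, indexed by rule number. -/
inductive Step : ℕ → Conf → Conf → Prop
  | r1 {t1 t2 : Tm Ident} {e : Env} {s : Stack} {σ : Store} :
      Step 1 (.eval (.app t1 t2, e) s σ) (.eval (t1, e) (.arg (t2, e) :: s) σ)
  | r2 {x : Ident} {t : Tm Ident} {e : Env} {s : Stack} {σ : Store} {ℓ : Loc}
      (h : lookupL σ ℓ = none) :
      Step 2 (.eval (.lam x t, e) s σ) (.cont ((ℓ, .pend x t e) :: σ) (.abs x t e ℓ) s)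
  | r3 {x : Ident} {e e2 : Env} {s : Stack} {σ : Store} {ℓ : Loc} {t : Tm Ident}
      (he : lookupL e x = some ℓ) (hσ : lookupL σ ℓ = some (.todo (t, e2))) :
      Step 3 (.eval (.var x, e) s σ) (.eval (t, e2) (.cache ℓ :: s) σ)
  | r4done {x : Ident} {e : Env} {s : Stack} {σ : Store} {ℓ : Loc} {v : Value}
      (he : lookupL e x = some ℓ) (hσ : lookupL σ ℓ = some (.done v)) :
      Step 4 (.eval (.var x, e) s σ) (.cont σ v s)
  | r4free {x : Ident} {e : Env} {s : Stack} {σ : Store}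
      (he : lookupL e x = none) :
      Step 4 (.eval (.var x, e) s σ) (.cont σ (.tm (.var x)) s)
  | r5 {σ : Store} {v : Value} {ℓ : Loc} {s : Stack} :
      Step 5 (.cont σ v (.cache ℓ :: s)) (.cont (updL σ ℓ (.done v)) v s)
  | r6 {σ : Store} {x : Ident} {t t2 : Tm Ident} {e e2 : Env} {ℓ ℓ2 : Loc} {s : Stack}
      (h : lookupL σ ℓ2 = none) :
      Step 6 (.cont σ (.abs x t e ℓ) (.arg (t2, e2) :: s))
             (.eval (t, (x, ℓ2) :: e) s ((ℓ2, .todo (t2, e2)) :: σ))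
  | r7 {σ : Store} {x x' x0 : Ident} {t t0 : Tm Ident} {e e0 : Env} {ℓ ℓ2 : Loc} {s : Stack}
      (hσ : lookupL σ ℓ = some (.pend x0 t0 e0))
      (hs1 : Stack.noArgTop s) (hs2 : Stack.noCacheTop s)
      (hℓ2 : lookupL σ ℓ2 = none)
      (hx' : x' ∉ confVars (.cont σ (.abs x t e ℓ) s)) :
      Step 7 (.cont σ (.abs x t e ℓ) s)
             (.eval (t, (x, ℓ2) :: e) (.lamF x' :: .cache ℓ :: s)
                    ((ℓ2, .done (.tm (.var x'))) :: σ))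
  | r8 {σ : Store} {x : Ident} {t : Tm Ident} {e : Env} {ℓ : Loc} {s : Stack} {v : Value}
      (hσ : lookupL σ ℓ = some (.done v))
      (hs1 : Stack.noArgTop s) (hs2 : Stack.noCacheTop s) :
      Step 8 (.cont σ (.abs x t e ℓ) s) (.cont σ v s)
  | r9 {σ : Store} {t t2 : Tm Ident} {e2 : Env} {s : Stack} :
      Step 9 (.cont σ (.tm t) (.arg (t2, e2) :: s)) (.eval (t2, e2) (.appL t :: s) σ)
  | r10 {σ : Store} {t1 t2 : Tm Ident} {s : Stack} :
      Step 10 (.cont σ (.tm t2) (.appL t1 :: s)) (.cont σ (.tm (.app t1 t2)) s)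
  | r11 {σ : Store} {t : Tm Ident} {x : Ident} {s : Stack} :
      Step 11 (.cont σ (.tm t) (.lamF x :: s)) (.cont σ (.tm (.lam x t)) s)

/-- Reachability by machine transitions. -/
inductive Reach (k0 : Conf) : Conf → Prop
  | refl : Reach k0 k0
  | step {k k' : Conf} {r : ℕ} : Reach k0 k → Step r k k' → Reach k0 k'

/- Generic syntax material used by the decoding: variable renaming of terms,
one-hole contexts, neutral/normal terms, normal-order contexts,
capture-avoiding substitution, normal-order reduction and α-equivalence. -/

def Tm.mapVar {V V' : Type} (f : V → V') : Tm V → Tm V'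
  | .var x => .var (f x)
  | .app a b => .app (Tm.mapVar f a) (Tm.mapVar f b)
  | .lam x t => .lam (f x) (Tm.mapVar f t)

/-- Variables of decoded terms: `Sum.inl x` is an ordinary identifier
(free variables and generated fresh names), `Sum.inr x` is the overlined
(marked) copy `x̄`, taken from a disjoint copy of the set of identifiers. -/
abbrev W : Type := Ident ⊕ Ident

/-- Embedding of machine terms into decoded terms. -/
def emb (t : Tm Ident) : Tm W := Tm.mapVar Sum.inl t

/-- One-hole contexts. -/
inductive Ctx (V : Type) : Type
  | hole : Ctx V
  | appL : Ctx V → Tm V → Ctx V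
  | appR : Tm V → Ctx V → Ctx V
  | lam : V → Ctx V → Ctx V

def Ctx.plug {V : Type} : Ctx V → Tm V → Tm V
  | .hole, t => t
  | .appL C u, t => .app (Ctx.plug C t) u
  | .appR u C, t => .app u (Ctx.plug C t)
  | .lam x C, t => .lam x (Ctx.plug C t)

def Ctx.comp {V : Type} : Ctx V → Ctx V → Ctx V
  | .hole, D => D
  | .appL C u, D => .appL (Ctx.comp C D) u
  | .appR u C, D => .appR u (Ctx.comp C D)
  | .lam x C, D => .lam x (Ctx.comp C D)

mutual
  inductive Neutral {V : Type} : Tm V → Prop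
    | var (x : V) : Neutral (.var x)
    | app {a n : Tm V} : Neutral a → NormalTm n → Neutral (.app a n)
  inductive NormalTm {V : Type} : Tm V → Prop
    | lam {x : V} {t : Tm V} : NormalTm t → NormalTm (.lam x t)
    | neu {a : Tm V} : Neutral a → NormalTm a
end

mutual
  inductive NOCtx {V : Type} : Ctx V → Prop
    | bar {C : Ctx V} : NOBar C → NOCtx C
    | lam {x : V} {C : Ctx V} : NOCtx C → NOCtx (.lam x C)
  inductive NOBar {V : Type} : Ctx V → Prop
    | hole : NOBar .hole
    | appL {C : Ctx V} {t : Tm V} : NOBar C → NOBar (.appL C t)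
    | appR {a : Tm V} {C : Ctx V} : Neutral a → NOCtx C → NOBar (.appR a C)
end

/-- `x` occurs free in a term. -/
inductive FreeIn {V : Type} (x : V) : Tm V → Prop
  | var : FreeIn x (.var x)
  | appL {a b : Tm V} : FreeIn x a → FreeIn x (.app a b)
  | appR {a b : Tm V} : FreeIn x b → FreeIn x (.app a b)
  | lam {y : V} {t : Tm V} : x ≠ y → FreeIn x t → FreeIn x (.lam y t)

/-- Capture-avoiding substitution `t{x := u}` (as a relation, allowing
α-renaming of binders that would capture variables of `u`). -/
inductive SubstRel {V : Type} : V → Tm V → Tm V → Tm V → Prop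
  | var_eq {x : V} {u : Tm V} : SubstRel x u (.var x) u
  | var_ne {x y : V} {u : Tm V} : y ≠ x → SubstRel x u (.var y) (.var y)
  | app {x : V} {u a a' b b' : Tm V} : SubstRel x u a a' → SubstRel x u b b' →
      SubstRel x u (.app a b) (.app a' b')
  | lam_same {x : V} {u t : Tm V} : SubstRel x u (.lam x t) (.lam x t)
  | lam {x y : V} {u t t' : Tm V} : y ≠ x → ¬ FreeIn y u → SubstRel x u t t' →
      SubstRel x u (.lam y t) (.lam y t')
  | lam_rename {x y z : V} {u t t0 t' : Tm V} : y ≠ x → FreeIn y u →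
      z ≠ x → ¬ FreeIn z u → ¬ FreeIn z t →
      SubstRel y (.var z) t t0 → SubstRel x u t0 t' →
      SubstRel x u (.lam y t) (.lam z t')

/-- One step of normal-order reduction: β-contraction in a normal-order context. -/
inductive NOStep {V : Type} : Tm V → Tm V → Prop
  | mk {N : Ctx V} {x : V} {b u r : Tm V} :
      NOCtx N → SubstRel x u b r →
      NOStep (N.plug (.app (.lam x b) u)) (N.plug r)

/-- Correspondence of variables under a list of bound-variable renamings. -/
inductive AVar {V : Type} : List (V × V) → V → V → Prop
  | nil {x : V} : AVar [] x x
  | here {x y : V} {ρ : List (V × V)} : AVar ((x, y) :: ρ) x y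
  | there {x y a b : V} {ρ : List (V × V)} :
      x ≠ a → y ≠ b → AVar ρ x y → AVar ((a, b) :: ρ) x y

/-- α-equivalence up to a list of bound-variable renamings. -/
inductive Alpha {V : Type} : List (V × V) → Tm V → Tm V → Prop
  | var {ρ : List (V × V)} {x y : V} : AVar ρ x y → Alpha ρ (.var x) (.var y)
  | app {ρ : List (V × V)} {a a' b b' : Tm V} :
      Alpha ρ a a' → Alpha ρ b b' → Alpha ρ (.app a b) (.app a' b')
  | lam {ρ : List (V × V)} {x y : V} {t t' : Tm V} :
      Alpha ((x, y) :: ρ) t t' → Alpha ρ (.lam x t) (.lam y t')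

/-- α-equivalence: equality up to renaming of bound variables. -/
def AlphaEq {V : Type} (t t' : Tm V) : Prop := Alpha [] t t'

/-- Subterm relation. -/
inductive Subtm {V : Type} : Tm V → Tm V → Prop
  | refl (t : Tm V) : Subtm t t
  | appL {s a b : Tm V} : Subtm s a → Subtm s (.app a b)
  | appR {s a b : Tm V} : Subtm s b → Subtm s (.app a b)
  | lam {s t : Tm V} {x : V} : Subtm s t → Subtm s (.lam x t)

def IsRedex {V : Type} (t : Tm V) : Prop := ∃ (x : V) (b u : Tm V), t = .app (.lam x b) u

/-- β-normal form: no subterm is a β-redex. -/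
def BetaNormal {V : Type} (t : Tm V) : Prop := ∀ s : Tm V, Subtm s t → ¬ IsRedex s

/- The history-dependent decoding of RKNL configurations. -/

/-- `HistFrom k0 H k` : `H` is the full sequence of configurations (oldest
first) of an execution from `k0` to `k`. -/
inductive HistFrom (k0 : Conf) : List Conf → Conf → Prop
  | refl : HistFrom k0 [k0] k0
  | step {H : List Conf} {k k' : Conf} {r : ℕ} :
      HistFrom k0 H k → Step r k k' → HistFrom k0 (H ++ [k']) k'

/-- `initOf H ℓ = some (H', sv)` : in the history `H`, location `ℓ` was
initialized with the storable value `sv`, and `H'` is the prefix of the history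
up to (and including) the configuration where `ℓ` was initialized. -/
def initOf : List Conf → Loc → Option (List Conf × Storable)
  | [], _ => none
  | k :: H, ℓ =>
    match lookupL (Conf.store k) ℓ with
    | some sv => some ([k], sv)
    | none => Option.map (fun p => (k :: p.1, p.2)) (initOf H ℓ)

/-- Decoding environments: an identifier is mapped either to a store location
(`Sum.inl ℓ`) or to an overlined variable `ȳ` (`Sum.inr y`) introduced when
decoding an abstraction. -/
abbrev DEnv : Type := List (Ident × (Loc ⊕ Ident))

def embEnv (e : Env) : DEnv := e.map fun p => (p.1, Sum.inl p.2)

/-- Decoding of closures relative to an execution history: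
`DecC H t e d` means the closure with term `t` and decoding environment `e`
decodes to the term `d` relative to the history `H`. A variable bound to a
location initialized (by rule 6) with an argument thunk decodes to the decoding
of that thunk at the time of initialization; a variable bound to a location
initialized (by rule 7) with a fresh variable decodes to that variable; an
unbound variable decodes to itself. -/
inductive DecC : List Conf → Tm Ident → DEnv → Tm W → Prop
  | app {H : List Conf} {t1 t2 : Tm Ident} {e : DEnv} {d1 d2 : Tm W} :
      DecC H t1 e d1 → DecC H t2 e d2 → DecC H (.app t1 t2) e (.app d1 d2)
  | lam {H : List Conf} {x : Ident} {t : Tm Ident} {e : DEnv} {d : Tm W} :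
      DecC H t ((x, Sum.inr x) :: e) d → DecC H (.lam x t) e (.lam (Sum.inr x) d)
  | var_bar {H : List Conf} {x y : Ident} {e : DEnv} :
      lookupL e x = some (Sum.inr y) → DecC H (.var x) e (.var (Sum.inr y))
  | var_arg {H H' : List Conf} {x : Ident} {e : DEnv} {ℓ : Loc}
      {t2 : Tm Ident} {e2 : Env} {d : Tm W} :
      lookupL e x = some (Sum.inl ℓ) →
      initOf H ℓ = some (H', .todo (t2, e2)) →
      DecC H' t2 (embEnv e2) d →
      DecC H (.var x) e d
  | var_fresh {H H' : List Conf} {x x' : Ident} {e : DEnv} {ℓ : Loc} :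
      lookupL e x = some (Sum.inl ℓ) →
      initOf H ℓ = some (H', .done (.tm (.var x'))) →
      DecC H (.var x) e (.var (Sum.inl x'))
  | var_free {H : List Conf} {x : Ident} {e : DEnv} :
      lookupL e x = none → DecC H (.var x) e (.var (Sum.inl x))

/-- Decoding of values. -/
inductive DecV : List Conf → Value → Tm W → Prop
  | tm {H : List Conf} {t : Tm Ident} : DecV H (.tm t) (emb t)
  | abs {H : List Conf} {x : Ident} {t : Tm Ident} {e : Env} {ℓ : Loc} {d : Tm W} :
      DecC H (.lam x t) (embEnv e) d → DecV H (.abs x t e ℓ) d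

/-- Decoding of stacks into one-hole contexts (memoization frames are ignored). -/
inductive DecS : List Conf → Stack → Ctx W → Prop
  | nil {H : List Conf} : DecS H [] .hole
  | arg {H : List Conf} {t : Tm Ident} {e : Env} {s : Stack} {C : Ctx W} {d : Tm W} :
      DecS H s C → DecC H t (embEnv e) d →
      DecS H (.arg (t, e) :: s) (C.comp (.appL .hole d))
  | appL {H : List Conf} {t : Tm Ident} {s : Stack} {C : Ctx W} :
      DecS H s C → DecS H (.appL t :: s) (C.comp (.appR (emb t) .hole))
  | lamF {H : List Conf} {x : Ident} {s : Stack} {C : Ctx W} :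
      DecS H s C → DecS H (.lamF x :: s) (C.comp (.lam (Sum.inl x) .hole))
  | cache {H : List Conf} {ℓ : Loc} {s : Stack} {C : Ctx W} :
      DecS H s C → DecS H (.cache ℓ :: s) C

/-- Decoding of configurations: the decoded focus is plugged into the decoded stack. -/
inductive DecK : List Conf → Conf → Tm W → Prop
  | eval {H : List Conf} {t : Tm Ident} {e : Env} {s : Stack} {σ : Store}
      {C : Ctx W} {d : Tm W} :
      DecS H s C → DecC H t (embEnv e) d → DecK H (.eval (t, e) s σ) (C.plug d)
  | cont {H : List Conf} {σ : Store} {v : Value} {s : Stack} {C : Ctx W} {d : Tm W} :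
      DecS H s C → DecV H v d → DecK H (.cont σ v s) (C.plug d)

/-!
Terms are interpreted as nameless terms, where β-steps commute with every renaming and α-equivalent
terms are equal; only at the end are nameless normal-order steps lifted back to named terms.

The history of a run matters to the decoding only through its *ghost*: what each location was
initialized with, and the term this denoted at that time. Unlike the store, the ghost only grows, so
memoization does not change denotations: it merely replaces what is stored at a location by a
normal-order reduct of the recorded term. The invariant says that this is the case for every
memoized value, and that each stack frame `.cache ℓ` surrounds a reduct of the term recorded for
`ℓ`. A bypass transition thus replays a recorded reduction, and no induction on the order of
allocation is needed. Rule 6 is a β-step, and the remaining rules preserve the denotation; for rule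
7, this uses that the generated name is free in no recorded term.

Which reductions can be replayed depends on the position of the hole: an argument is forced in head
position, where reduction stops at an abstraction (kind `.bar`), whereas the location of an
abstraction memoizes its full normal form (kind `.full`).
-/

/-- λ-terms up to α-equivalence, with free variables in `α`: de Bruijn terms in nested form, where
the body of an abstraction has the extra free variable `none` for the bound one. -/
inductive Nameless : Type → Type 1
  | var {α : Type} : α → Nameless α
  | app {α : Type} : Nameless α → Nameless α → Nameless α
  | lam {α : Type} : Nameless (Option α) → Nameless α

namespace Nameless

variable {α β γ : Type}

/-- Renaming of free variables. -/
def rename {α β : Type} (f : α → β) : Nameless α → Nameless β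
  | var x => var (f x)
  | app a b => app (a.rename f) (b.rename f)
  | lam a => lam (a.rename (Option.map f))

/-- The substitution `θ` extended under a binder. -/
def up (θ : α → Nameless β) : Option α → Nameless (Option β)
  | none => var none
  | some x => (θ x).rename some

/-- Simultaneous substitution for the free variables. -/
def subst {α β : Type} (θ : α → Nameless β) : Nameless α → Nameless β
  | var x => θ x
  | app a b => app (a.subst θ) (b.subst θ)
  | lam a => lam (a.subst (up θ))

/-- The substitution that replaces the bound variable of an abstraction by `u`. -/
def inst (u : Nameless α) : Option α → Nameless α := fun o => o.elim u var

/-- Abstraction over the free variable `x`. -/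
def abstr [DecidableEq α] (x : α) (a : Nameless α) : Nameless α :=
  lam (a.rename (Function.update some x none))

/-- `Free x a`: the variable `x` occurs free in `a`. -/
inductive Free : {α : Type} → α → Nameless α → Prop
  | var {α : Type} {x : α} : Free x (var x)
  | appL {α : Type} {x : α} {a b : Nameless α} : Free x a → Free x (app a b)
  | appR {α : Type} {x : α} {a b : Nameless α} : Free x b → Free x (app a b)
  | lam {α : Type} {x : α} {a : Nameless (Option α)} : Free (some x) a → Free x (lam a)

theorem rename_rename (g : β → γ) (f : α → β) (a : Nameless α) :
    (a.rename f).rename g = a.rename (g ∘ f) := by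
  induction a generalizing β γ with
  | var x => rfl
  | app a b iha ihb => simp only [rename, iha, ihb]
  | lam a ih => simp only [rename, ih, Option.map_comp_map]

theorem subst_rename (θ : β → Nameless γ) (f : α → β) (a : Nameless α) :
    (a.rename f).subst θ = a.subst (θ ∘ f) := by
  induction a generalizing β γ with
  | var x => rfl
  | app a b iha ihb => simp only [rename, subst, iha, ihb]
  | lam a ih =>
    have up_comp : up θ ∘ Option.map f = up (θ ∘ f) := by funext o; cases o <;> rfl
    simp only [rename, subst, ih, up_comp]

theorem rename_subst (f : β → γ) (θ : α → Nameless β) (a : Nameless α) :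
    (a.subst θ).rename f = a.subst fun x => (θ x).rename f := by
  induction a generalizing β γ with
  | var x => rfl
  | app a b iha ihb => simp only [rename, subst, iha, ihb]
  | lam a ih =>
    have rename_up : (fun o => (up θ o).rename (Option.map f)) = up fun x => (θ x).rename f := by
      funext o
      cases o with
      | none => rfl
      | some x => simp only [up, rename_rename]; rfl
    simp only [rename, subst, ih, rename_up]

theorem subst_var (a : Nameless α) : a.subst var = a := by
  induction a with
  | var x => rfl
  | app a b iha ihb => simp only [subst, iha, ihb]
  | @lam α a ih =>
    have up_var : up (var : α → Nameless α) = var := by funext o; cases o <;> rfl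
    simp only [subst, up_var, ih]

theorem subst_var_comp (f : α → β) (a : Nameless α) : a.subst (var ∘ f) = a.rename f := by
  rw [← subst_rename, subst_var]

theorem rename_subst_inst (f : α → β) (u : Nameless α) (b : Nameless (Option α)) :
    (b.subst (inst u)).rename f = (b.rename (Option.map f)).subst (inst (u.rename f)) := by
  rw [rename_subst, subst_rename]
  congr 1
  funext o
  cases o <;> rfl

theorem subst_inst_rename_some (u a : Nameless α) : (a.rename some).subst (inst u) = a := by
  rw [subst_rename]
  exact subst_var a

theorem rename_abstr [DecidableEq α] [DecidableEq β] {f : α → β} (hf : f.Injective) (x : α)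
    (a : Nameless α) : (abstr x a).rename f = abstr (f x) (a.rename f) := by
  simp only [abstr, rename, rename_rename]
  congr 2
  funext y
  by_cases h : y = x
  · simp [h]
  · simp [h, hf.ne h]

theorem rename_id (a : Nameless α) : a.rename id = a := by
  rw [← subst_var_comp]
  exact subst_var a

theorem rename_congr {f g : α → β} {a : Nameless α} (h : ∀ x, Free x a → f x = g x) :
    a.rename f = a.rename g := by
  induction a generalizing β with
  | var x => simp only [rename, h x .var]
  | app a b iha ihb =>
    simp only [rename, iha fun x hx => h x hx.appL, ihb fun x hx => h x hx.appR]
  | lam a ih =>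
    simp only [rename]
    rw [ih]
    rintro (_ | x) hx
    · rfl
    · simp only [Option.map_some, h x hx.lam]

theorem Free.of_rename {f : α → β} {a : Nameless α} {y : β} (h : Free y (a.rename f)) :
    ∃ x, f x = y ∧ Free x a := by
  induction a generalizing β with
  | var x => cases h; exact ⟨x, rfl, .var⟩
  | app a b iha ihb =>
    cases h with
    | appL h => exact (iha h).imp fun _ hx => ⟨hx.1, hx.2.appL⟩
    | appR h => exact (ihb h).imp fun _ hx => ⟨hx.1, hx.2.appR⟩
  | lam a ih =>
    cases h with
    | lam h =>
      obtain ⟨_ | x, hx, hfree⟩ := ih h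
      · simp at hx
      · exact ⟨x, by simpa using hx, hfree.lam⟩

theorem abstr_subst_inst_var [DecidableEq α] {b : Nameless (Option α)} {z : α}
    (hz : ¬ Free z (lam b)) : (b.subst (inst (var z))).abstr z = lam b := by
  have inst_var : inst (var z) = var ∘ fun o : Option α => o.elim z id := by
    funext o
    cases o <;> rfl
  rw [inst_var, subst_var_comp, abstr, rename_rename]
  congr 1
  refine (rename_congr ?_).trans (rename_id b)
  rintro (_ | y) hy
  · simp
  · have hyz : y ≠ z := fun h => hz (h ▸ hy.lam)
    simp [hyz]

end Nameless

/-! ### Normal-order reduction -/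

/-- The nonterminals of the grammar of normal-order contexts: `bar` for `N̄`, `full` for `N`. -/
inductive Kind : Type
  | bar
  | full

/-- The normal-order contexts generated by a nonterminal. -/
def Kind.IsCtx {V : Type} : Kind → Ctx V → Prop
  | .bar => NOBar
  | .full => NOCtx

/-- The normal forms of a nonterminal: `bar` for neutral terms, `full` for all normal forms. -/
def Kind.IsNormal {V : Type} : Kind → Tm V → Prop
  | .bar => Neutral
  | .full => NormalTm

namespace Kind

variable {V : Type} {κ : Kind}

theorem IsNormal.normalTm {t : Tm V} (h : κ.IsNormal t) : NormalTm t := by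
  cases κ with
  | bar => exact .neu h
  | full => exact h

theorem isNormal_var {x : V} : κ.IsNormal (.var x) := by
  cases κ with
  | bar => exact .var x
  | full => exact .neu (.var x)

theorem isNormal_app_iff {a b : Tm V} :
    κ.IsNormal (.app a b) ↔ bar.IsNormal a ∧ full.IsNormal b := by
  have neutral_iff : Neutral (.app a b) ↔ Neutral a ∧ NormalTm b :=
    ⟨fun | .app ha hb => ⟨ha, hb⟩, fun h => .app h.1 h.2⟩
  cases κ with
  | bar => exact neutral_iff
  | full => exact Iff.trans ⟨fun | .neu h => h, .neu⟩ neutral_iff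

theorem isNormal_lam_iff {x : V} {t : Tm V} :
    κ.IsNormal (.lam x t) ↔ κ = full ∧ full.IsNormal t := by
  cases κ with
  | bar => exact ⟨nofun, nofun⟩
  | full => exact ⟨fun | .lam h => ⟨rfl, h⟩, fun h => .lam h.2⟩

end Kind

namespace Nameless

variable {α : Type} {κ : Kind}

/-- Normal forms of kind `κ` among nameless terms. -/
inductive Normal : Kind → {α : Type} → Nameless α → Prop
  | var {α : Type} {x : α} : Normal .bar (.var x)
  | app {α : Type} {a b : Nameless α} : Normal .bar a → Normal .full b → Normal .bar (.app a b)
  | lam {α : Type} {a : Nameless (Option α)} : Normal .full a → Normal .full (.lam a)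
  | neutral {α : Type} {a : Nameless α} : Normal .bar a → Normal .full a

/-- A β-step of nameless terms in a normal-order context of kind `κ`. -/
inductive Red : Kind → {α : Type} → Nameless α → Nameless α → Prop
  | beta {α : Type} {b : Nameless (Option α)} {u : Nameless α} :
      Red .bar (.app (.lam b) u) (b.subst (inst u))
  | appL {α : Type} {a a' u : Nameless α} : Red .bar a a' → Red .bar (.app a u) (.app a' u)
  | appR {α : Type} {a u u' : Nameless α} :
      Normal .bar a → Red .full u u' → Red .bar (.app a u) (.app a u')
  | lam {α : Type} {a a' : Nameless (Option α)} : Red .full a a' → Red .full (.lam a) (.lam a')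
  | ofBar {α : Type} {a a' : Nameless α} : Red .bar a a' → Red .full a a'

theorem normal_var {x : α} : Normal κ (.var x) := by
  cases κ with
  | bar => exact .var
  | full => exact .neutral .var

theorem normal_app_iff {a b : Nameless α} :
    Normal κ (.app a b) ↔ Normal .bar a ∧ Normal .full b := by
  have normal_bar_iff : Normal .bar (.app a b) ↔ Normal .bar a ∧ Normal .full b :=
    ⟨fun | .app ha hb => ⟨ha, hb⟩, fun h => .app h.1 h.2⟩
  cases κ with
  | bar => exact normal_bar_iff
  | full => exact Iff.trans ⟨fun | .neutral h => h, .neutral⟩ normal_bar_iff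

theorem normal_lam_iff {a : Nameless (Option α)} :
    Normal κ (.lam a) ↔ κ = .full ∧ Normal .full a := by
  cases κ with
  | bar => exact ⟨nofun, nofun⟩
  | full => exact ⟨fun | .lam h => ⟨rfl, h⟩ | .neutral h => (nomatch h), fun h => .lam h.2⟩

theorem Normal.rename {β : Type} (f : α → β) {a : Nameless α} (h : Normal κ a) :
    Normal κ (a.rename f) := by
  induction h generalizing β with
  | var => exact .var
  | app _ _ iha ihb => exact .app (iha f) (ihb f)
  | lam _ ih => exact .lam (ih _)
  | neutral _ ih => exact .neutral (ih f)

theorem Red.rename {β : Type} (f : α → β) {a b : Nameless α} (h : Red κ a b) :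
    Red κ (a.rename f) (b.rename f) := by
  induction h generalizing β with
  | beta => rw [rename_subst_inst]; exact .beta
  | appL _ ih => exact .appL (ih f)
  | appR hn _ ih => exact .appR (hn.rename f) (ih f)
  | lam _ ih => exact .lam (ih _)
  | ofBar _ ih => exact .ofBar (ih f)

theorem Red.full {a b : Nameless α} (h : Red κ a b) : Red .full a b := by
  cases κ with
  | bar => exact .ofBar h
  | full => exact h

/-- Many-step normal-order reduction of nameless terms in contexts of kind `κ`. -/
abbrev Reds (κ : Kind) : Nameless α → Nameless α → Prop := Relation.ReflTransGen (Red κ)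

namespace Reds

open Relation (ReflTransGen)

variable {a b u : Nameless α}

theorem full (h : Reds κ a b) : Reds .full a b := ReflTransGen.mono (fun _ _ => Red.full) _ _ h

theorem rename {β : Type} (f : α → β) (h : Reds κ a b) : Reds κ (a.rename f) (b.rename f) :=
  ReflTransGen.lift (Nameless.rename f) (fun _ _ => Red.rename f) _ _ h

theorem appL (h : Reds .bar a b) : Reds .bar (app a u) (app b u) :=
  ReflTransGen.lift (app · u) (fun _ _ => .appL) _ _ h

theorem appR (hu : Normal .bar u) (h : Reds κ a b) : Reds .bar (app u a) (app u b) :=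
  ReflTransGen.lift (app u) (fun _ _ => .appR hu) _ _ h.full

theorem abstr [DecidableEq α] (x : α) (h : Reds κ a b) : Reds .full (a.abstr x) (b.abstr x) :=
  ReflTransGen.lift lam (fun _ _ => .lam) _ _ (h.full.rename _)

end Reds

end Nameless

/-! ### Interpretation of named terms -/

section Interp

open Nameless

variable {V α β : Type} [DecidableEq V]

/-- The environment `η` extended under a binder named `x`. -/
def liftEnv (η : V → Nameless α) (x : V) : V → Nameless (Option α) :=
  Function.update (fun y => (η y).rename some) x (.var none)

/-- The nameless term denoted by a named term whose free variables denote `η`. -/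
def Tm.interp {α : Type} (η : V → Nameless α) : Tm V → Nameless α
  | .var x => η x
  | .app a b => .app (a.interp η) (b.interp η)
  | .lam x t => .lam (t.interp (liftEnv η x))

@[simp]
theorem liftEnv_self (η : V → Nameless α) (x : V) : liftEnv η x x = .var none :=
  Function.update_self ..

@[simp]
theorem liftEnv_of_ne (η : V → Nameless α) {x y : V} (h : y ≠ x) :
    liftEnv η x y = (η y).rename some :=
  Function.update_of_ne h ..

theorem liftEnv_var_comp (ρ : V → α) (x : V) :
    liftEnv (.var ∘ ρ) x = .var ∘ Function.update (some ∘ ρ) x none := by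
  funext y
  by_cases h : y = x
  · simp [h]
  · simp [h, Nameless.rename]

namespace Tm

theorem interp_congr {t : Tm V} {η η' : V → Nameless α} (h : ∀ y, FreeIn y t → η y = η' y) :
    t.interp η = t.interp η' := by
  induction t generalizing α with
  | var x => exact h x .var
  | app a b iha ihb =>
    simp only [interp, iha fun y hy => h y (.appL hy), ihb fun y hy => h y (.appR hy)]
  | lam x t ih =>
    simp only [interp]
    rw [ih]
    intro y hy
    by_cases hyx : y = x
    · simp [hyx]
    · simp [hyx, h y (.lam hyx hy)]

theorem subst_interp (θ : α → Nameless β) (η : V → Nameless α) (t : Tm V) :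
    (t.interp η).subst θ = t.interp fun y => (η y).subst θ := by
  induction t generalizing α β with
  | var x => rfl
  | app a b iha ihb => simp only [interp, subst, iha, ihb]
  | lam x t ih =>
    have subst_lift : (fun y => (liftEnv η x y).subst (up θ)) =
        liftEnv (fun y => (η y).subst θ) x := by
      funext y
      by_cases hyx : y = x
      · simp [hyx, subst, up]
      · simp only [liftEnv_of_ne _ hyx, subst_rename, rename_subst]
        rfl
    simp only [interp, subst, ih, subst_lift]

theorem rename_interp (f : α → β) (η : V → Nameless α) (t : Tm V) :
    (t.interp η).rename f = t.interp fun y => (η y).rename f := by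
  simp only [← subst_var_comp, subst_interp]

theorem subst_inst_interp (u : Nameless α) (η : V → Nameless α) (x : V) (t : Tm V) :
    (t.interp (liftEnv η x)).subst (inst u) = t.interp (Function.update η x u) := by
  rw [subst_interp]
  congr 1
  funext y
  by_cases hyx : y = x
  · simp [hyx, subst, inst]
  · simp [hyx, subst_inst_rename_some]

theorem exists_freeIn_of_free_interp {t : Tm V} {η : V → Nameless α} {z : α}
    (h : Free z (t.interp η)) : ∃ y, FreeIn y t ∧ Free z (η y) := by
  induction t generalizing α with
  | var x => exact ⟨x, .var, h⟩
  | app a b iha ihb =>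
    cases h with
    | appL h => exact (iha h).imp fun _ hy => ⟨hy.1.appL, hy.2⟩
    | appR h => exact (ihb h).imp fun _ hy => ⟨hy.1.appR, hy.2⟩
  | lam x t ih =>
    cases h with
    | lam h =>
      obtain ⟨y, hy, hz⟩ := ih h
      by_cases hyx : y = x
      · rw [hyx, liftEnv_self] at hz
        cases hz
      · rw [liftEnv_of_ne _ hyx] at hz
        obtain ⟨w, hw, hfree⟩ := hz.of_rename
        cases hw
        exact ⟨y, .lam hyx hy, hfree⟩

theorem interp_mapVar {V' : Type} [DecidableEq V'] {f : V → V'} (hf : f.Injective)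
    (η : V' → Nameless α) (t : Tm V) : (t.mapVar f).interp η = t.interp (η ∘ f) := by
  induction t generalizing α with
  | var x => rfl
  | app a b iha ihb => simp only [mapVar, interp, iha, ihb]
  | lam x t ih =>
    have lift_comp : liftEnv η (f x) ∘ f = liftEnv (η ∘ f) x := by
      funext y
      by_cases hyx : y = x
      · simp [hyx]
      · simp [hyx, hf.ne hyx]
    simp only [mapVar, interp, ih, lift_comp]

theorem interp_lam_var (x : V) (t : Tm V) : (lam x t).interp .var = (t.interp .var).abstr x := by
  simp only [interp, abstr, rename_interp]
  congr 2
  exact liftEnv_var_comp id x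

theorem interp_eq_app {t : Tm V} {ρ : V → α} {a b : Nameless α}
    (h : t.interp (.var ∘ ρ) = .app a b) :
    ∃ t₁ t₂, t = .app t₁ t₂ ∧ t₁.interp (.var ∘ ρ) = a ∧ t₂.interp (.var ∘ ρ) = b := by
  cases t with
  | app t₁ t₂ => cases h; exact ⟨t₁, t₂, rfl, rfl, rfl⟩
  | _ => cases h

theorem interp_eq_lam {t : Tm V} {ρ : V → α} {a : Nameless (Option α)}
    (h : t.interp (.var ∘ ρ) = .lam a) :
    ∃ x t', t = .lam x t' ∧ t'.interp (.var ∘ Function.update (some ∘ ρ) x none) = a := by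
  cases t with
  | lam x t' => cases h; exact ⟨x, t', rfl, by rw [liftEnv_var_comp]⟩
  | _ => cases h

end Tm

end Interp

/-! ### Substitution and reduction of named terms -/

section NamedTerms

variable {V : Type}

theorem Tm.finite_setOf_freeIn (t : Tm V) : {z | FreeIn z t}.Finite := by
  induction t with
  | var x =>
    refine (Set.finite_singleton x).subset ?_
    rintro z ⟨⟩
    rfl
  | app a b iha ihb =>
    refine (iha.union ihb).subset fun z hz => ?_
    cases hz with
    | appL hz => exact .inl hz
    | appR hz => exact .inr hz
  | lam x t ih =>
    refine ih.subset fun z hz => ?_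
    cases hz with
    | lam _ hz => exact hz

/-- The number of nodes of a term, the measure for recursion through renamed bodies. -/
def Tm.size : Tm V → ℕ
  | .var _ => 1
  | .app a b => a.size + b.size + 1
  | .lam _ t => t.size + 1

theorem SubstRel.size_eq {x z : V} {t r : Tm V} (h : SubstRel x (.var z) t r) :
    r.size = t.size := by
  generalize hu : Tm.var z = u at h
  induction h generalizing z with
  | var_eq => rw [← hu]; rfl
  | var_ne | lam_same => rfl
  | app _ _ iha ihb => simp only [Tm.size, iha hu, ihb hu]
  | lam _ _ _ ih => simp only [Tm.size, ih hu]
  | lam_rename _ _ _ _ _ _ _ ih₀ ih' => simp only [Tm.size, ih' hu, ih₀ rfl]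

theorem exists_substRel [Infinite V] (x : V) (u t : Tm V) : ∃ r, SubstRel x u t r := by
  match t with
  | .var y =>
    by_cases hyx : y = x
    · subst hyx
      exact ⟨u, .var_eq⟩
    · exact ⟨_, .var_ne hyx⟩
  | .app a b =>
    obtain ⟨a', ha⟩ := exists_substRel x u a
    obtain ⟨b', hb⟩ := exists_substRel x u b
    exact ⟨_, .app ha hb⟩
  | .lam y t =>
    by_cases hyx : y = x
    · subst hyx
      exact ⟨_, .lam_same⟩
    by_cases hyu : FreeIn y u
    · obtain ⟨z, hz⟩ := ((u.finite_setOf_freeIn.union t.finite_setOf_freeIn).insert x).exists_notMem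
      simp only [Set.mem_insert_iff, Set.mem_union, Set.mem_ofPred_eq, not_or] at hz
      obtain ⟨t₀, h₀⟩ := exists_substRel y (.var z) t
      obtain ⟨t', ht'⟩ := exists_substRel x u t₀
      exact ⟨_, .lam_rename hyx hyu hz.1 hz.2.1 hz.2.2 h₀ ht'⟩
    · obtain ⟨t', ht'⟩ := exists_substRel x u t
      exact ⟨_, .lam hyx hyu ht'⟩
termination_by t.size
decreasing_by
  all_goals simp only [Tm.size]
  all_goals first | omega | (rw [SubstRel.size_eq ‹_›]; omega)

/-- One step of normal-order reduction: β-contraction in a normal-order context of kind `κ`. -/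
inductive NOStepIn (κ : Kind) : Tm V → Tm V → Prop
  | mk {N : Ctx V} {x : V} {b u r : Tm V} : κ.IsCtx N → SubstRel x u b r →
      NOStepIn κ (N.plug (.app (.lam x b) u)) (N.plug r)

namespace NOStepIn

variable {a a' u u' : Tm V}

theorem appL (h : NOStepIn .bar a a') : NOStepIn .bar (.app a u) (.app a' u) := by
  obtain ⟨hN, hr⟩ := h
  exact mk (N := .appL _ u) (.appL hN) hr

theorem appR (ha : Neutral a) (h : NOStepIn .full u u') :
    NOStepIn .bar (.app a u) (.app a u') := by
  obtain ⟨hN, hr⟩ := h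
  exact mk (N := .appR a _) (.appR ha hN) hr

theorem lam {x : V} (h : NOStepIn .full a a') : NOStepIn .full (.lam x a) (.lam x a') := by
  obtain ⟨hN, hr⟩ := h
  exact mk (N := .lam x _) (.lam hN) hr

theorem ofBar (h : NOStepIn .bar a a') : NOStepIn .full a a' := by
  obtain ⟨hN, hr⟩ := h
  exact mk (NOCtx.bar hN) hr

theorem noStep (h : NOStepIn .full a a') : NOStep a a' := by
  obtain ⟨hN, hr⟩ := h
  exact .mk hN hr

end NOStepIn

theorem NormalTm.of_subtm {s t : Tm V} (h : Subtm s t) (ht : NormalTm t) :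
    NormalTm s := by
  induction h with
  | refl => exact ht
  | appL _ ih =>
    rcases ht with _ | ⟨⟨_, _⟩⟩
    exact ih (.neu ‹_›)
  | appR _ ih =>
    rcases ht with _ | ⟨⟨_, _⟩⟩
    exact ih ‹_›
  | lam _ ih =>
    rcases ht with _ | ⟨⟨⟩⟩
    exact ih ‹_›

theorem NormalTm.betaNormal {t : Tm V} (ht : NormalTm t) : BetaNormal t := by
  rintro s hs ⟨x, b, u, rfl⟩
  rcases ht.of_subtm hs with _ | ⟨h | ⟨h, _⟩⟩
  cases h

end NamedTerms

/-! ### Named terms against nameless terms -/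

section Reflection

open Nameless

variable {V α : Type} [DecidableEq V]

theorem Alpha.of_interp_eq {a b : Tm V} {ρ₁ ρ₂ : V → α} {L : List (V × V)}
    (hL : ∀ x y, ρ₁ x = ρ₂ y → AVar L x y) (h : a.interp (.var ∘ ρ₁) = b.interp (.var ∘ ρ₂)) :
    Alpha L a b := by
  induction a generalizing α b L with
  | var x =>
    cases b with
    | var y => exact .var (hL x y (Nameless.var.inj h))
    | _ => cases h
  | app a₁ a₂ ih₁ ih₂ =>
    obtain ⟨b₁, b₂, rfl, h₁, h₂⟩ := Tm.interp_eq_app h.symm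
    exact .app (ih₁ hL h₁.symm) (ih₂ hL h₂.symm)
  | lam x a ih =>
    obtain ⟨y, b, rfl, hb⟩ := Tm.interp_eq_lam h.symm
    rw [liftEnv_var_comp] at hb
    refine .lam (ih ?_ hb.symm)
    intro x' y' hxy
    by_cases hx : x' = x <;> by_cases hy : y' = y
    · subst hx hy
      exact .here
    · simp [hx, hy] at hxy
    · simp [hx, hy] at hxy
    · exact .there hx hy (hL _ _ (by simpa [hx, hy] using hxy))

theorem AlphaEq.of_interp_eq {a b : Tm V} (h : a.interp .var = b.interp .var) : AlphaEq a b :=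
  Alpha.of_interp_eq (ρ₁ := id) (ρ₂ := id) (by rintro x _ rfl; exact .nil) h

theorem liftEnv_update_self (η : V → Nameless α) (x : V) (a : Nameless α) :
    liftEnv (Function.update η x a) x = liftEnv η x := by
  funext y
  by_cases hyx : y = x <;> simp [hyx]

theorem liftEnv_update_of_ne (η : V → Nameless α) {x y : V} (hyx : y ≠ x) (a : Nameless α) :
    liftEnv (Function.update η x a) y = Function.update (liftEnv η y) x (a.rename some) := by
  funext v
  by_cases hvx : v = x <;> by_cases hvy : v = y <;> simp_all [hyx.symm]

theorem Tm.interp_liftEnv_of_not_freeIn {y : V} {u : Tm V} (hy : ¬ FreeIn y u)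
    (η : V → Nameless α) : u.interp (liftEnv η y) = (u.interp η).rename some := by
  rw [rename_interp]
  exact interp_congr fun v hv => liftEnv_of_ne _ fun hvy => hy (hvy ▸ hv)

theorem SubstRel.interp {x : V} {u t r : Tm V} (h : SubstRel x u t r) (η : V → Nameless α) :
    r.interp η = t.interp (Function.update η x (u.interp η)) := by
  induction h generalizing α with
  | var_eq => simp [Tm.interp]
  | var_ne hyx => simp [Tm.interp, hyx]
  | app _ _ iha ihb => simp only [Tm.interp, iha, ihb]
  | lam_same => simp only [Tm.interp, liftEnv_update_self]
  | lam hyx hyu _ ih =>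
    simp only [Tm.interp, ih, Tm.interp_liftEnv_of_not_freeIn hyu, liftEnv_update_of_ne _ hyx]
  | @lam_rename x y z u t t₀ t' hyx _ hzx hzu hzt _ _ ih₀ ih' =>
    simp only [Tm.interp, ih', ih₀, Tm.interp_liftEnv_of_not_freeIn hzu]
    congr 1
    refine Tm.interp_congr fun v hv => ?_
    have hvz : v ≠ z := fun hvz => hzt (hvz ▸ hv)
    by_cases hvy : v = y
    · simp [hvy, hzx]
    · by_cases hvx : v = x <;> simp [hvy, hvx, hvz, hyx.symm]

theorem Tm.normal_interp_iff {t : Tm V} {ρ : V → α} {κ : Kind} :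
    Normal κ (t.interp (.var ∘ ρ)) ↔ κ.IsNormal t := by
  induction t generalizing α κ with
  | var x => simp only [interp, Function.comp, normal_var, Kind.isNormal_var]
  | app a b iha ihb => simp only [interp, normal_app_iff, Kind.isNormal_app_iff, iha, ihb]
  | lam x t ih =>
    simp only [interp, normal_lam_iff, Kind.isNormal_lam_iff, liftEnv_var_comp, ih]

theorem Nameless.Red.exists_noStepIn [Infinite V] {κ : Kind} {m m' : Nameless α} (h : Red κ m m')
    {a : Tm V} {ρ : V → α} (ha : a.interp (.var ∘ ρ) = m) :
    ∃ a', NOStepIn κ a a' ∧ a'.interp (.var ∘ ρ) = m' := by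
  induction h generalizing a with
  | beta =>
    obtain ⟨f, u, rfl, hf, rfl⟩ := Tm.interp_eq_app ha
    obtain ⟨x, b, rfl, rfl⟩ := Tm.interp_eq_lam hf
    obtain ⟨r, hr⟩ := exists_substRel x u b
    refine ⟨r, .mk (N := .hole) .hole hr, ?_⟩
    rw [hr.interp, ← liftEnv_var_comp, Tm.subst_inst_interp]
  | appL _ ih =>
    obtain ⟨f, u, rfl, hf, rfl⟩ := Tm.interp_eq_app ha
    obtain ⟨f', hstep, rfl⟩ := ih hf
    exact ⟨_, hstep.appL, rfl⟩
  | appR hn _ ih =>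
    obtain ⟨f, u, rfl, rfl, hu⟩ := Tm.interp_eq_app ha
    obtain ⟨u', hstep, rfl⟩ := ih hu
    exact ⟨_, hstep.appR (Tm.normal_interp_iff.mp hn), rfl⟩
  | lam _ ih =>
    obtain ⟨x, b, rfl, hb⟩ := Tm.interp_eq_lam ha
    obtain ⟨b', hstep, rfl⟩ := ih hb
    exact ⟨_, hstep.lam, by rw [Tm.interp, liftEnv_var_comp]⟩
  | ofBar _ ih =>
    obtain ⟨a', hstep, rfl⟩ := ih ha
    exact ⟨a', hstep.ofBar, rfl⟩

theorem exists_noSteps_alphaEq [Infinite V] {a b : Tm V}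
    (h : Reds .full (a.interp .var) (b.interp .var)) :
    ∃ a', Relation.ReflTransGen NOStep a a' ∧ AlphaEq a' b := by
  suffices ∀ m, Reds .full (a.interp .var) m →
      ∃ a', Relation.ReflTransGen NOStep a a' ∧ a'.interp .var = m by
    obtain ⟨a', hsteps, ha'⟩ := this _ h
    exact ⟨a', hsteps, .of_interp_eq ha'⟩
  intro m hm
  induction hm with
  | refl => exact ⟨a, .refl, rfl⟩
  | tail _ hstep ih =>
    obtain ⟨a', hsteps, ha'⟩ := ih
    obtain ⟨a'', hstep', ha''⟩ := hstep.exists_noStepIn (ρ := id) ha'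
    exact ⟨a'', hsteps.tail hstep'.noStep, ha''⟩

end Reflection

/-! ### Denotation of configurations -/

theorem lookupL_updL {β : Type} (l : List (ℕ × β)) (x y : ℕ) (b : β) :
    lookupL (updL l x b) y = if y = x then (lookupL l y).map fun _ => b else lookupL l y := by
  induction l with
  | nil => simp [updL, lookupL]
  | cons p l ih =>
    rw [updL] at ih ⊢
    grind [lookupL]

/-- What the decoding remembers of the history of a run: the storable value with which each
allocated location was initialized, and the term that this value denoted. -/
structure Ghost where
  initial : Loc → Option Storable
  val : Loc → Nameless Ident

/-- The kind of normal form to which a thunk is evaluated: an argument is forced in head position,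
an abstraction in a position where its body has to be normalized too. -/
def Storable.kind : Storable → Option Kind
  | .pend _ _ _ => some .full
  | .todo _ => some .bar
  | .done _ => none

namespace Ghost

open Nameless

/-- The denotation of the identifiers in an environment. -/
def env (G : Ghost) (e : Env) (x : Ident) : Nameless Ident :=
  (lookupL e x).elim (.var x) G.val

/-- The denotation of a closure. -/
def clo (G : Ghost) (c : Closure) : Nameless Ident :=
  c.1.interp (G.env c.2)

/-- The denotation of a value. -/
def value (G : Ghost) : Value → Nameless Ident
  | .tm t => t.interp .var
  | .abs x t e _ => G.clo (.lam x t, e)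

/-- The denotation of a storable value. -/
def storable (G : Ghost) : Storable → Nameless Ident
  | .pend x t e => G.clo (.lam x t, e)
  | .todo c => G.clo c
  | .done v => G.value v

/-- The denotation of a stack, as a function of the term in its hole. -/
def plug (G : Ghost) : Stack → Nameless Ident → Nameless Ident
  | [], a => a
  | .arg c :: s, a => G.plug s (.app a (G.clo c))
  | .appL t :: s, a => G.plug s (.app (t.interp .var) a)
  | .lamF x :: s, a => G.plug s (a.abstr x)
  | .cache _ :: s, a => G.plug s a

/-- The denotation of a configuration. -/
def conf (G : Ghost) : Conf → Nameless Ident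
  | .eval c s _ => G.plug s (G.clo c)
  | .cont _ v s => G.plug s (G.value v)

/-- The ghost after the allocation of `ℓ` with initial content `sv`. -/
def alloc (G : Ghost) (ℓ : Loc) (sv : Storable) : Ghost where
  initial := Function.update G.initial ℓ (some sv)
  val := Function.update G.val ℓ (G.storable sv)

/-- Ghosts are ordered by extension of the set of allocated locations. -/
instance : LE Ghost where
  le G G' := ∀ ℓ sv, G.initial ℓ = some sv → G'.initial ℓ = some sv ∧ G'.val ℓ = G.val ℓ

theorem le_alloc {G : Ghost} {ℓ : Loc} (hℓ : G.initial ℓ = none) (sv : Storable) :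
    G ≤ G.alloc ℓ sv := by
  intro ℓ' sv' h
  have hne : ℓ' ≠ ℓ := by rintro rfl; simp [hℓ] at h
  simp [alloc, hne, h]

theorem env_cons (G : Ghost) (x : Ident) (ℓ : Loc) (e : Env) :
    G.env ((x, ℓ) :: e) = Function.update (G.env e) x (G.val ℓ) := by
  funext y
  by_cases hyx : y = x <;> simp [env, lookupL, hyx]

theorem clo_var_of_lookupL (G : Ghost) {e : Env} {x : Ident} {ℓ : Loc} (h : lookupL e x = some ℓ) :
    G.clo (.var x, e) = G.val ℓ := by
  simp [clo, Tm.interp, env, h]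

/-- An environment is well formed if it refers to allocated locations only, none of which was
allocated for an abstraction. -/
def EnvOK (G : Ghost) (e : Env) : Prop :=
  ∀ x ℓ, lookupL e x = some ℓ → ∃ sv, G.initial ℓ = some sv ∧ sv.kind ≠ some .full

/-- A well-formed value of kind `κ`: a normal form of that kind, or an abstraction paired with the
location allocated for it. -/
def ValueOK (G : Ghost) (κ : Kind) : Value → Prop
  | .tm t => κ.IsNormal t
  | .abs x t e ℓ => G.initial ℓ = some (.pend x t e)

/-- A well-formed initial content of a location: a thunk or a generated name. -/
def StorableOK (G : Ghost) : Storable → Prop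
  | .pend _ _ e => G.EnvOK e
  | .todo c => G.EnvOK c.2
  | .done v => ∃ x, v = .tm (.var x)

/-- The recorded initial contents are well formed and denote the recorded terms. -/
def Coherent (G : Ghost) : Prop :=
  ∀ ℓ sv, G.initial ℓ = some sv → G.StorableOK sv ∧ G.val ℓ = G.storable sv

/-- `a` is an intermediate result of evaluating the thunk allocated at `ℓ`, whose kind is `κ`. -/
def Computes (G : Ghost) (κ : Kind) (ℓ : Loc) (a : Nameless Ident) : Prop :=
  ∃ sv, G.initial ℓ = some sv ∧ sv.kind = some κ ∧ Reds κ (G.val ℓ) a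

/-- `v` is a correct final result for the thunk allocated at `ℓ`. -/
def Memoizes (G : Ghost) (ℓ : Loc) (v : Value) : Prop :=
  ∃ κ, G.ValueOK κ v ∧ G.Computes κ ℓ (G.value v)

/-- The store agrees with the ghost: each location holds its initial content or a memoized value. -/
structure StoreOK (G : Ghost) (σ : Store) : Prop where
  initial_eq_none_iff : ∀ ℓ, G.initial ℓ = none ↔ lookupL σ ℓ = none
  stored : ∀ ℓ sv, lookupL σ ℓ = some sv →
    G.initial ℓ = some sv ∨ ∃ v, sv = .done v ∧ G.Memoizes ℓ v

/-- `G.StackOK s κ a`: the stack `s` is well formed with `a` in its hole, and the hole is a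
position for normal-order reduction of kind `κ`. -/
inductive StackOK (G : Ghost) : Stack → Kind → Nameless Ident → Prop
  | nil {κ : Kind} {a : Nameless Ident} : StackOK G [] κ a
  | arg {c : Closure} {s : Stack} {a : Nameless Ident} : G.EnvOK c.2 →
      StackOK G s .bar (.app a (G.clo c)) → StackOK G (.arg c :: s) .bar a
  | appL {t : Tm Ident} {s : Stack} {κ : Kind} {a : Nameless Ident} : Neutral t →
      StackOK G s .bar (.app (t.interp .var) a) → StackOK G (.appL t :: s) κ a
  | lamF {x : Ident} {s : Stack} {κ : Kind} {a : Nameless Ident} :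
      StackOK G s .full (a.abstr x) → StackOK G (.lamF x :: s) κ a
  | cache {ℓ : Loc} {s : Stack} {κ : Kind} {a : Nameless Ident} : G.Computes κ ℓ a →
      StackOK G s κ a → StackOK G (.cache ℓ :: s) κ a

/-- A configuration is well formed if its focus and its stack are. -/
def ConfOK (G : Ghost) : Conf → Prop
  | .eval c s _ => G.EnvOK c.2 ∧ G.StackOK s .bar (G.clo c)
  | .cont _ v s => ∃ κ, G.ValueOK κ v ∧ G.StackOK s κ (G.value v)

section Extension

variable {G G' : Ghost} (hle : G ≤ G')

include hle

theorem EnvOK.mono {e : Env} (he : G.EnvOK e) : G'.EnvOK e := fun x ℓ hx =>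
  let ⟨sv, hsv, hkind⟩ := he x ℓ hx
  ⟨sv, (hle ℓ sv hsv).1, hkind⟩

theorem env_eq_of_le {e : Env} (he : G.EnvOK e) : G'.env e = G.env e := by
  funext x
  cases hx : lookupL e x with
  | none => simp [env, hx]
  | some ℓ =>
    obtain ⟨sv, hsv, -⟩ := he x ℓ hx
    simp [env, hx, (hle ℓ sv hsv).2]

theorem clo_eq_of_le {c : Closure} (hc : G.EnvOK c.2) : G'.clo c = G.clo c := by
  rw [clo, clo, env_eq_of_le hle hc]

theorem ValueOK.mono {κ : Kind} {v : Value} (hv : G.ValueOK κ v) : G'.ValueOK κ v := by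
  cases v with
  | tm t => exact hv
  | abs x t e ℓ => exact (hle ℓ _ hv).1

theorem value_eq_of_le (hG : G.Coherent) {κ : Kind} {v : Value} (hv : G.ValueOK κ v) :
    G'.value v = G.value v := by
  cases v with
  | tm t => rfl
  | abs x t e ℓ => exact clo_eq_of_le hle (c := (.lam x t, e)) (hG ℓ _ hv).1

theorem StorableOK.mono {sv : Storable} (h : G.StorableOK sv) : G'.StorableOK sv := by
  cases sv with
  | pend x t e => exact EnvOK.mono hle h
  | todo c => exact EnvOK.mono hle h
  | done v => exact h

theorem storable_eq_of_le {sv : Storable} (h : G.StorableOK sv) :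
    G'.storable sv = G.storable sv := by
  cases sv with
  | pend x t e => exact clo_eq_of_le hle (c := (.lam x t, e)) h
  | todo c => exact clo_eq_of_le hle h
  | done v =>
    obtain ⟨x, rfl⟩ := h
    rfl

theorem Computes.mono {κ : Kind} {ℓ : Loc} {a : Nameless Ident} (h : G.Computes κ ℓ a) :
    G'.Computes κ ℓ a := by
  obtain ⟨sv, hsv, hkind, hred⟩ := h
  exact ⟨sv, (hle ℓ sv hsv).1, hkind, (hle ℓ sv hsv).2 ▸ hred⟩

theorem Memoizes.mono (hG : G.Coherent) {ℓ : Loc} {v : Value} (h : G.Memoizes ℓ v) :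
    G'.Memoizes ℓ v := by
  obtain ⟨κ, hv, hc⟩ := h
  exact ⟨κ, hv.mono hle, value_eq_of_le hle hG hv ▸ hc.mono hle⟩

theorem StackOK.mono {s : Stack} {κ : Kind} {a : Nameless Ident} (h : G.StackOK s κ a) :
    G'.StackOK s κ a := by
  induction h with
  | nil => exact .nil
  | arg hc _ ih => exact .arg (hc.mono hle) (clo_eq_of_le hle hc ▸ ih)
  | appL ht _ ih => exact .appL ht ih
  | lamF _ ih => exact .lamF ih
  | cache hc _ ih => exact .cache (hc.mono hle) ih

theorem plug_eq_of_le {s : Stack} {κ : Kind} {a : Nameless Ident} (h : G.StackOK s κ a) :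
    G'.plug s a = G.plug s a := by
  induction h with
  | nil => rfl
  | arg hc _ ih => rw [plug, plug, clo_eq_of_le hle hc, ih]
  | appL _ _ ih => exact ih
  | lamF _ ih => exact ih
  | cache _ _ ih => exact ih

end Extension

theorem EnvOK.alloc_cons {G : Ghost} {e : Env} (he : G.EnvOK e) {ℓ : Loc} (hℓ : G.initial ℓ = none)
    (x : Ident) {sv : Storable} (hsv : sv.kind ≠ some .full) :
    (G.alloc ℓ sv).EnvOK ((x, ℓ) :: e) := by
  intro y ℓ' hy
  rw [lookupL] at hy
  split_ifs at hy
  · cases hy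
    exact ⟨sv, by simp [alloc], hsv⟩
  · exact he.mono (le_alloc hℓ sv) y ℓ' hy

theorem clo_alloc_cons {G : Ghost} {e : Env} (he : G.EnvOK e) {ℓ : Loc} (hℓ : G.initial ℓ = none)
    (x : Ident) (sv : Storable) (t : Tm Ident) :
    (G.alloc ℓ sv).clo (t, (x, ℓ) :: e) =
      t.interp (Function.update (G.env e) x (G.storable sv)) := by
  rw [clo, env_cons, env_eq_of_le (le_alloc hℓ sv) he]
  simp [alloc]

theorem abstr_clo_alloc_cons {G : Ghost} {e : Env} (he : G.EnvOK e) {ℓ : Loc}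
    (hℓ : G.initial ℓ = none) {x x' : Ident} {t : Tm Ident}
    (hx' : ¬ Free x' (G.clo (.lam x t, e))) :
    ((G.alloc ℓ (.done (.tm (.var x')))).clo (t, (x, ℓ) :: e)).abstr x' = G.clo (.lam x t, e) := by
  rw [clo_alloc_cons he hℓ, ← Tm.subst_inst_interp]
  exact abstr_subst_inst_var hx'

theorem Coherent.alloc {G : Ghost} (hG : G.Coherent) {ℓ : Loc} (hℓ : G.initial ℓ = none)
    {sv : Storable} (hsv : G.StorableOK sv) : (G.alloc ℓ sv).Coherent := by
  have hle : G ≤ G.alloc ℓ sv := le_alloc hℓ sv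
  intro ℓ' sv' h
  by_cases hne : ℓ' = ℓ
  · subst hne
    obtain rfl : sv = sv' := by simpa [Ghost.alloc] using h
    exact ⟨hsv.mono hle, by rw [storable_eq_of_le hle hsv]; simp [Ghost.alloc]⟩
  · have h' : G.initial ℓ' = some sv' := by simpa [Ghost.alloc, hne] using h
    obtain ⟨hok, hval⟩ := hG ℓ' sv' h'
    exact ⟨hok.mono hle, by rw [storable_eq_of_le hle hok, (hle ℓ' sv' h').2, hval]⟩

theorem StoreOK.alloc {G : Ghost} (hG : G.Coherent) {σ : Store} (hσ : G.StoreOK σ) {ℓ : Loc}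
    (hℓ : lookupL σ ℓ = none) (sv : Storable) : (G.alloc ℓ sv).StoreOK ((ℓ, sv) :: σ) where
  initial_eq_none_iff ℓ' := by
    by_cases hne : ℓ' = ℓ <;> simp [Ghost.alloc, lookupL, hne, hσ.initial_eq_none_iff]
  stored ℓ' sv' h := by
    have hle : G ≤ G.alloc ℓ sv := le_alloc ((hσ.initial_eq_none_iff ℓ).2 hℓ) sv
    by_cases hne : ℓ' = ℓ
    · exact .inl (by simpa [Ghost.alloc, lookupL, hne] using h)
    · have h' : lookupL σ ℓ' = some sv' := by simpa [lookupL, hne] using h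
      exact (hσ.stored ℓ' sv' h').imp (fun hin => (hle _ _ hin).1)
        fun ⟨v, hv, hmem⟩ => ⟨v, hv, hmem.mono hle hG⟩

theorem StoreOK.updL {G : Ghost} {σ : Store} (hσ : G.StoreOK σ) {ℓ : Loc} {v : Value}
    (hv : G.Memoizes ℓ v) : G.StoreOK (updL σ ℓ (.done v)) where
  initial_eq_none_iff ℓ' := by
    rw [hσ.initial_eq_none_iff, lookupL_updL]
    split_ifs <;> simp
  stored ℓ' sv' h := by
    rw [lookupL_updL] at h
    split_ifs at h with hℓ'
    · subst hℓ'
      obtain ⟨_, _, rfl⟩ := Option.map_eq_some_iff.mp h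
      exact .inr ⟨v, rfl, hv⟩
    · exact hσ.stored ℓ' sv' h

namespace StackOK

variable {G : Ghost} {s : Stack} {κ : Kind} {a a' : Nameless Ident}

theorem full_of_top (h : G.StackOK s κ a) (harg : s.noArgTop) (hcache : s.noCacheTop) :
    G.StackOK s .full a := by
  cases h with
  | nil => exact .nil
  | arg => exact harg.elim
  | appL ht hs => exact .appL ht hs
  | lamF hs => exact .lamF hs
  | cache => exact hcache.elim

theorem reds (h : G.StackOK s κ a) (hred : Reds κ a a') :
    G.StackOK s κ a' ∧ Reds .full (G.plug s a) (G.plug s a') := by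
  induction h generalizing a' with
  | nil => exact ⟨.nil, hred.full⟩
  | arg hc _ ih => exact (ih hred.appL).imp_left (.arg hc)
  | appL ht _ ih =>
    exact (ih (hred.appR (Tm.normal_interp_iff (ρ := id).mpr ht))).imp_left (.appL ht)
  | lamF _ ih => exact (ih (hred.abstr _)).imp_left .lamF
  | cache hc _ ih =>
    obtain ⟨sv, hsv, hkind, hval⟩ := hc
    exact (ih hred).imp_left (.cache ⟨sv, hsv, hkind, hval.trans hred⟩)

theorem initial_ne_none_of_cache_mem (h : G.StackOK s κ a) {ℓ : Loc} (hℓ : .cache ℓ ∈ s) :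
    G.initial ℓ ≠ none := by
  induction h with
  | nil => cases hℓ
  | arg _ _ ih | appL _ _ ih | lamF _ ih => exact ih (by simpa using hℓ)
  | cache hc _ ih =>
    rcases List.mem_cons.mp hℓ with heq | hmem
    · cases heq
      obtain ⟨sv, hsv, -⟩ := hc
      simp [hsv]
    · exact ih hmem

end StackOK

end Ghost

/-! ### Free names -/

/-- The names free in a closure. -/
def cloFree (c : Closure) : Set Ident := {z | FreeIn z c.1 ∧ lookupL c.2 z = none}

/-- The names of a value. Those of an abstraction are accounted for by the location allocated
for it. -/
def valFree : Value → Set Ident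
  | .tm t => {z | z ∈ tmVars t}
  | .abs _ _ _ _ => ∅

/-- The names of a storable value. -/
def storableFree : Storable → Set Ident
  | .pend x t e => cloFree (.lam x t, e)
  | .todo c => cloFree c
  | .done v => valFree v

/-- The names of a stack. -/
def stackFree : Stack → Set Ident
  | [] => ∅
  | .arg c :: s => cloFree c ∪ stackFree s
  | .appL t :: s => {z | z ∈ tmVars t} ∪ stackFree s
  | .lamF _ :: s | .cache _ :: s => stackFree s

/-- The names of a store, except for the thunks under evaluation according to the stack `s`. -/
def storeFree (s : Stack) (σ : Store) : Set Ident :=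
  {z | ∃ ℓ sv, lookupL σ ℓ = some sv ∧ .cache ℓ ∉ s ∧ z ∈ storableFree sv}

/-- The names that the future evolution of a configuration may depend on. -/
def confFree : Conf → Set Ident
  | .eval c s σ => cloFree c ∪ (stackFree s ∪ storeFree s σ)
  | .cont σ v s => valFree v ∪ (stackFree s ∪ storeFree s σ)

theorem cloFree_app_subset (t₁ t₂ : Tm Ident) (e : Env) :
    cloFree (.app t₁ t₂, e) ⊆ cloFree (t₁, e) ∪ cloFree (t₂, e) := by
  rintro z ⟨hz, he⟩
  cases hz with
  | appL hz => exact .inl ⟨hz, he⟩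
  | appR hz => exact .inr ⟨hz, he⟩

theorem cloFree_lam_subset (x : Ident) (t : Tm Ident) (e : Env) (ℓ : Loc) :
    cloFree (.lam x t, e) ⊆ cloFree (t, (x, ℓ) :: e) := by
  rintro z ⟨hz, he⟩
  cases hz with
  | lam hzx hz => exact ⟨hz, by rw [lookupL, if_neg hzx, he]⟩

theorem cloFree_var_eq_empty {x : Ident} {e : Env} {ℓ : Loc} (he : lookupL e x = some ℓ) :
    cloFree (.var x, e) = ∅ := by
  refine Set.eq_empty_of_forall_notMem ?_
  rintro z ⟨⟨⟩, hz⟩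
  simp [he] at hz

theorem mem_tmVars_of_freeIn {z : Ident} {t : Tm Ident} (h : FreeIn z t) : z ∈ tmVars t := by
  induction h with
  | var => simp [tmVars]
  | appL _ ih => simp [tmVars, ih]
  | appR _ ih => simp [tmVars, ih]
  | lam _ _ ih => simp [tmVars, ih]

theorem cloFree_subset (c : Closure) : cloFree c ⊆ {z | z ∈ tmVars c.1} :=
  fun _ hz => mem_tmVars_of_freeIn hz.1

theorem storableFree_subset (sv : Storable) : storableFree sv ⊆ {z | z ∈ storableVars sv} := by
  intro z hz
  cases sv with
  | pend x t e => exact List.mem_append_left (as := x :: tmVars t) _ (cloFree_subset _ hz)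
  | todo c => exact List.mem_append_left _ (cloFree_subset _ hz)
  | done v =>
    cases v with
    | tm t => exact hz
    | abs => exact hz.elim

theorem stackFree_subset (s : Stack) : stackFree s ⊆ {z | z ∈ stackVars s} := by
  intro z hz
  induction s with
  | nil => exact hz.elim
  | cons f s ih =>
    refine List.mem_append.mpr ?_
    cases f with
    | arg c => exact hz.imp (fun h => List.mem_append_left _ (cloFree_subset _ h)) ih
    | appL t => exact hz.imp id ih
    | lamF x => exact .inr (ih hz)
    | cache ℓ => exact .inr (ih hz)

theorem storeFree_subset (s : Stack) (σ : Store) : storeFree s σ ⊆ {z | z ∈ storeVars σ} := by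
  rintro z ⟨ℓ, sv, hℓ, -, hz⟩
  induction σ with
  | nil => cases hℓ
  | cons p σ ih =>
    refine List.mem_append.mpr ?_
    rw [lookupL] at hℓ
    split_ifs at hℓ with h
    · cases hℓ
      exact .inl (storableFree_subset _ hz)
    · exact .inr (ih hℓ)

theorem confFree_subset (k : Conf) : confFree k ⊆ {z | z ∈ confVars k} := by
  have hs := stackFree_subset
  have hσ := storeFree_subset
  rcases k with ⟨c, s, σ⟩ | ⟨σ, v, s⟩ <;> rintro z (hz | hz | hz)
  all_goals simp only [confVars, Set.mem_ofPred_eq, List.mem_append]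
  · exact .inl (.inl (.inl (cloFree_subset _ hz)))
  · exact .inl (.inr (hs _ hz))
  · exact .inr (hσ _ _ hz)
  · exact .inl (.inl (storableFree_subset (.done v) hz))
  · exact .inl (.inr (hs _ hz))
  · exact .inr (hσ _ _ hz)

theorem storeFree_cons_arg (c : Closure) (s : Stack) (σ : Store) :
    storeFree (.arg c :: s) σ = storeFree s σ := by
  simp [storeFree]

theorem storeFree_cons_appL (t : Tm Ident) (s : Stack) (σ : Store) :
    storeFree (.appL t :: s) σ = storeFree s σ := by
  simp [storeFree]

theorem storeFree_cons_lamF (x : Ident) (s : Stack) (σ : Store) :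
    storeFree (.lamF x :: s) σ = storeFree s σ := by
  simp [storeFree]

theorem storeFree_subset_cons_cache {σ : Store} {ℓ : Loc} {sv : Storable}
    (hℓ : lookupL σ ℓ = some sv) (s : Stack) :
    storeFree s σ ⊆ storableFree sv ∪ storeFree (.cache ℓ :: s) σ := by
  rintro z ⟨ℓ', sv', hℓ', hs, hz⟩
  by_cases h : ℓ' = ℓ
  · subst h
    obtain rfl : sv = sv' := by simpa [hℓ] using hℓ'
    exact .inl hz
  · exact .inr ⟨ℓ', sv', hℓ', by simp [h, hs], hz⟩

theorem storeFree_cons_cache_subset_updL (s : Stack) (σ : Store) (ℓ : Loc) (sv : Storable) :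
    storeFree (.cache ℓ :: s) σ ⊆ storeFree s (updL σ ℓ sv) := by
  rintro z ⟨ℓ', sv', hℓ', hs, hz⟩
  rw [List.mem_cons, not_or] at hs
  have hne : ℓ' ≠ ℓ := fun h => hs.1 (h ▸ rfl)
  exact ⟨ℓ', sv', by rw [lookupL_updL, if_neg hne, hℓ'], hs.2, hz⟩

theorem storeFree_subset_cons {σ : Store} {ℓ : Loc} (hℓ : lookupL σ ℓ = none) (s : Stack)
    (sv : Storable) : storeFree s σ ⊆ storeFree s ((ℓ, sv) :: σ) := by
  rintro z ⟨ℓ', sv', hℓ', hs, hz⟩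
  have hne : ℓ' ≠ ℓ := by rintro rfl; simp [hℓ] at hℓ'
  exact ⟨ℓ', sv', by rw [lookupL, if_neg hne, hℓ'], hs, hz⟩

theorem storableFree_subset_storeFree_cons {s : Stack} {ℓ : Loc} (hs : .cache ℓ ∉ s)
    (sv : Storable) (σ : Store) : storableFree sv ⊆ storeFree s ((ℓ, sv) :: σ) :=
  fun _ hz => ⟨ℓ, sv, by simp [lookupL], hs, hz⟩

theorem storeFree_subset_confFree (k : Conf) : storeFree k.stack k.store ⊆ confFree k := by
  cases k <;> exact fun _ hz => .inr (.inr hz)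

/-! ### The machine invariant -/

namespace Ghost

open Nameless

variable {G : Ghost} {k k' : Conf}

theorem mem_cloFree_or_free_val {G : Ghost} {c : Closure} {z : Ident} (h : Free z (G.clo c)) :
    z ∈ cloFree c ∨ ∃ x ℓ, lookupL c.2 x = some ℓ ∧ Free z (G.val ℓ) := by
  obtain ⟨y, hy, hz⟩ := Tm.exists_freeIn_of_free_interp h
  rw [env] at hz
  cases he : lookupL c.2 y with
  | none =>
    rw [he] at hz
    cases hz
    exact .inl ⟨hy, he⟩
  | some ℓ =>
    rw [he] at hz
    exact .inr ⟨y, ℓ, he, hz⟩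

theorem StorableOK.mem_storableFree_or_free_val {sv : Storable} (hsv : G.StorableOK sv) {z : Ident}
    (h : Free z (G.storable sv)) :
    z ∈ storableFree sv ∨ ∃ ℓ, G.initial ℓ ≠ none ∧ Free z (G.val ℓ) := by
  have allocated {e : Env} (he : G.EnvOK e) :
      (∃ x ℓ, lookupL e x = some ℓ ∧ Free z (G.val ℓ)) →
        ∃ ℓ, G.initial ℓ ≠ none ∧ Free z (G.val ℓ) := by
    rintro ⟨x, ℓ, hx, hz⟩
    obtain ⟨sv, hℓ, -⟩ := he x ℓ hx
    exact ⟨ℓ, by simp [hℓ], hz⟩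
  cases sv with
  | pend x t e => exact (mem_cloFree_or_free_val h).imp_right (allocated hsv)
  | todo c => exact (mem_cloFree_or_free_val h).imp_right (allocated hsv)
  | done v =>
    obtain ⟨x, rfl⟩ := hsv
    cases h
    exact .inl (List.mem_singleton.mpr rfl)

/-- The invariant relating a reachable configuration to the ghost of its history. -/
structure Invariant (G : Ghost) (k : Conf) : Prop where
  coherent : G.Coherent
  storeOK : G.StoreOK k.store
  mem_confFree : ∀ ℓ, G.initial ℓ ≠ none → ∀ z, Free z (G.val ℓ) → z ∈ confFree k
  confOK : G.ConfOK k

/-- A transition is simulated if, after recording the location it allocates, the invariant holds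
again and the denotation has made normal-order steps. -/
def Simulates (G : Ghost) (k k' : Conf) : Prop :=
  ∃ G' : Ghost, (∀ ℓ, G'.initial ℓ = (G.initial ℓ).or (lookupL k'.store ℓ)) ∧ G'.Invariant k' ∧
    Reds .full (G.conf k) (G'.conf k')

theorem Invariant.simulates_of_storeOK (hk : G.Invariant k) (hσ : G.StoreOK k'.store)
    (hfree : confFree k ⊆ confFree k') (hconf : G.ConfOK k')
    (hred : Reds .full (G.conf k) (G.conf k')) : G.Simulates k k' := by
  refine ⟨G, fun ℓ => ?_, ⟨hk.coherent, hσ, fun ℓ hℓ z hz => hfree (hk.mem_confFree ℓ hℓ z hz),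
    hconf⟩, hred⟩
  cases hℓ : G.initial ℓ with
  | none => simp [(hσ.initial_eq_none_iff ℓ).1 hℓ]
  | some sv => rfl

theorem Invariant.simulates_of_alloc (hk : G.Invariant k) {ℓ : Loc} {sv : Storable}
    (hℓ : lookupL k.store ℓ = none) (hsv : G.StorableOK sv) (hσ : k'.store = (ℓ, sv) :: k.store)
    (hs : .cache ℓ ∉ k'.stack) (hfree : confFree k ⊆ confFree k') (hconf : (G.alloc ℓ sv).ConfOK k')
    (hred : Reds .full (G.conf k) ((G.alloc ℓ sv).conf k')) : G.Simulates k k' := by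
  have hinitial : G.initial ℓ = none := (hk.storeOK.initial_eq_none_iff ℓ).2 hℓ
  refine ⟨G.alloc ℓ sv, fun ℓ' => ?_, ⟨hk.coherent.alloc hinitial hsv, ?_, fun ℓ' hℓ' z hz => ?_,
    hconf⟩, hred⟩
  · by_cases hne : ℓ' = ℓ
    · simp [alloc, hσ, hne, hinitial, lookupL]
    · cases h : G.initial ℓ' with
      | none => simp [alloc, hσ, hne, lookupL, h, (hk.storeOK.initial_eq_none_iff ℓ').1 h]
      | some => simp [alloc, hne, h]
  · rw [hσ]
    exact hk.storeOK.alloc hk.coherent hℓ sv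
  · by_cases hne : ℓ' = ℓ
    · have hz' : Free z (G.storable sv) := by simpa [alloc, hne] using hz
      rcases hsv.mem_storableFree_or_free_val hz' with h | ⟨ℓ'', h, hz''⟩
      · refine storeFree_subset_confFree k' ?_
        rw [hσ]
        exact storableFree_subset_storeFree_cons hs sv _ h
      · exact hfree (hk.mem_confFree ℓ'' h z hz'')
    · simp only [alloc, Function.update_of_ne hne] at hz hℓ'
      exact hfree (hk.mem_confFree ℓ' hℓ' z hz)

namespace Invariant

variable {x x' : Ident} {t t₁ t₂ : Tm Ident} {e : Env} {c : Closure} {v : Value} {s : Stack}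
  {σ : Store} {ℓ ℓ' : Loc}

theorem cache_notMem (hk : G.Invariant k) (hℓ : lookupL k.store ℓ = none) :
    .cache ℓ ∉ k.stack := by
  have hinitial := (hk.storeOK.initial_eq_none_iff ℓ).2 hℓ
  rcases k with ⟨c, s, σ⟩ | ⟨σ, v, s⟩
  · exact fun h => hk.confOK.2.initial_ne_none_of_cache_mem h hinitial
  · obtain ⟨κ, -, hs⟩ := hk.confOK
    exact fun h => hs.initial_ne_none_of_cache_mem h hinitial

theorem simulates_app (hk : G.Invariant (.eval (.app t₁ t₂, e) s σ)) :
    G.Simulates (.eval (.app t₁ t₂, e) s σ) (.eval (t₁, e) (.arg (t₂, e) :: s) σ) := by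
  obtain ⟨he, hs⟩ := hk.confOK
  refine hk.simulates_of_storeOK hk.storeOK ?_ ⟨he, .arg he hs⟩ .refl
  simp only [confFree, stackFree, storeFree_cons_arg]
  intro z hz
  have := @cloFree_app_subset t₁ t₂ e z
  simp only [Set.mem_union] at *
  tauto

theorem simulates_lam (hk : G.Invariant (.eval (.lam x t, e) s σ)) (hℓ : lookupL σ ℓ = none) :
    G.Simulates (.eval (.lam x t, e) s σ) (.cont ((ℓ, .pend x t e) :: σ) (.abs x t e ℓ) s) := by
  have hs' := hk.cache_notMem hℓ
  have hle : G ≤ G.alloc ℓ (.pend x t e) := le_alloc ((hk.storeOK.initial_eq_none_iff ℓ).2 hℓ) _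
  obtain ⟨he, hs⟩ := hk.confOK
  have hval : (G.alloc ℓ (.pend x t e)).value (.abs x t e ℓ) = G.clo (.lam x t, e) :=
    clo_eq_of_le hle he
  refine hk.simulates_of_alloc (sv := .pend x t e) hℓ he rfl hs' ?_ ⟨.bar, ?_, ?_⟩ ?_
  · have := storeFree_subset_cons hℓ s (.pend x t e)
    have := storableFree_subset_storeFree_cons hs' (.pend x t e) σ
    grind [confFree, storableFree, Conf.stack]
  · simp [ValueOK, alloc]
  · rw [hval]
    exact hs.mono hle
  · rw [conf, conf, hval, plug_eq_of_le hle hs]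

theorem simulates_force (hk : G.Invariant (.eval (.var x, e) s σ)) (he : lookupL e x = some ℓ)
    (hℓ : lookupL σ ℓ = some (.todo c)) :
    G.Simulates (.eval (.var x, e) s σ) (.eval c (.cache ℓ :: s) σ) := by
  have hs := hk.confOK.2
  have hinitial : G.initial ℓ = some (.todo c) := by
    rcases hk.storeOK.stored ℓ _ hℓ with h | ⟨v, ⟨⟩, -⟩
    exact h
  obtain ⟨hc, hval⟩ := hk.coherent ℓ _ hinitial
  have hclo : G.clo (.var x, e) = G.clo c := (G.clo_var_of_lookupL he).trans hval
  rw [hclo] at hs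
  refine hk.simulates_of_storeOK hk.storeOK ?_
    ⟨hc, .cache ⟨_, hinitial, rfl, by rw [hval]; exact .refl⟩ hs⟩ (by rw [conf, hclo]; exact .refl)
  have := storeFree_subset_cons_cache hℓ s
  simp only [confFree, stackFree, cloFree_var_eq_empty he, storableFree] at *
  grind

theorem simulates_lookup_done (hk : G.Invariant (.eval (.var x, e) s σ))
    (he : lookupL e x = some ℓ) (hℓ : lookupL σ ℓ = some (.done v)) :
    G.Simulates (.eval (.var x, e) s σ) (.cont σ v s) := by
  obtain ⟨henv, hs⟩ := hk.confOK
  obtain ⟨hv, hred⟩ : G.ValueOK .bar v ∧ Reds .bar (G.clo (.var x, e)) (G.value v) := by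
    rw [G.clo_var_of_lookupL he]
    rcases hk.storeOK.stored ℓ _ hℓ with h | ⟨_, ⟨⟩, κ, hv, sv, hsv, hkind, hred⟩
    · obtain ⟨⟨y, rfl⟩, hval⟩ := hk.coherent ℓ _ h
      exact ⟨.var y, by rw [hval]; exact .refl⟩
    · obtain ⟨sv', hsv', hfull⟩ := henv x ℓ he
      obtain rfl : sv = sv' := by simpa [hsv] using hsv'
      cases κ with
      | bar => exact ⟨hv, hred⟩
      | full => exact absurd hkind hfull
  refine hk.simulates_of_storeOK hk.storeOK ?_ ⟨.bar, hv, (hs.reds hred).1⟩ (hs.reds hred).2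
  simp [confFree, cloFree_var_eq_empty he]

theorem simulates_lookup_free (hk : G.Invariant (.eval (.var x, e) s σ))
    (he : lookupL e x = none) :
    G.Simulates (.eval (.var x, e) s σ) (.cont σ (.tm (.var x)) s) := by
  have hs := hk.confOK.2
  have hclo : G.clo (.var x, e) = G.value (.tm (.var x)) := by
    simp [clo, Tm.interp, env, he, value]
  refine hk.simulates_of_storeOK hk.storeOK ?_ ⟨.bar, .var x, hclo ▸ hs⟩
    (by rw [conf, hclo]; exact .refl)
  exact Set.union_subset_union_left _ (cloFree_subset _)

theorem simulates_memoize (hk : G.Invariant (.cont σ v (.cache ℓ :: s))) :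
    G.Simulates (.cont σ v (.cache ℓ :: s)) (.cont (updL σ ℓ (.done v)) v s) := by
  obtain ⟨κ, hv, hs⟩ := hk.confOK
  cases hs with
  | cache hc hs =>
    refine hk.simulates_of_storeOK (hk.storeOK.updL ⟨κ, hv, hc⟩) ?_ ⟨κ, hv, hs⟩ .refl
    have := storeFree_cons_cache_subset_updL s σ ℓ (.done v)
    simp only [confFree, stackFree]
    grind

theorem simulates_beta (hk : G.Invariant (.cont σ (.abs x t e ℓ) (.arg c :: s)))
    (hℓ' : lookupL σ ℓ' = none) :
    G.Simulates (.cont σ (.abs x t e ℓ) (.arg c :: s))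
      (.eval (t, (x, ℓ') :: e) s ((ℓ', .todo c) :: σ)) := by
  have hinitial : G.initial ℓ' = none := (hk.storeOK.initial_eq_none_iff ℓ').2 hℓ'
  have hle : G ≤ G.alloc ℓ' (.todo c) := le_alloc hinitial _
  have hs' : .cache ℓ' ∉ s := fun h => hk.cache_notMem hℓ' (List.mem_cons_of_mem _ h)
  obtain ⟨_, hv, hs⟩ := hk.confOK
  have he : G.EnvOK e := (hk.coherent ℓ _ hv).1
  cases hs with
  | arg hc hs =>
    have hred : Reds .bar (.app (G.clo (.lam x t, e)) (G.clo c))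
        ((G.alloc ℓ' (.todo c)).clo (t, (x, ℓ') :: e)) := by
      rw [clo_alloc_cons he hinitial, ← Tm.subst_inst_interp]
      exact .single .beta
    obtain ⟨hs, hplug⟩ := hs.reds hred
    refine hk.simulates_of_alloc (sv := .todo c) hℓ' hc rfl hs' ?_
      ⟨he.alloc_cons hinitial x nofun, hs.mono hle⟩ ?_
    · have := storeFree_subset_cons hℓ' s (.todo c)
      have := storableFree_subset_storeFree_cons hs' (.todo c) σ
      simp only [confFree, stackFree, storeFree_cons_arg]
      grind [valFree, storableFree]
    · rw [conf, conf, plug_eq_of_le hle hs]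
      exact hplug

theorem simulates_open (hk : G.Invariant (.cont σ (.abs x t e ℓ) s))
    {x₀ : Ident} {t₀ : Tm Ident} {e₀ : Env} (hℓ : lookupL σ ℓ = some (.pend x₀ t₀ e₀))
    (harg : s.noArgTop) (hcache : s.noCacheTop) (hℓ' : lookupL σ ℓ' = none)
    (hx' : x' ∉ confVars (.cont σ (.abs x t e ℓ) s)) :
    G.Simulates (.cont σ (.abs x t e ℓ) s) (.eval (t, (x, ℓ') :: e) (.lamF x' :: .cache ℓ :: s)
      ((ℓ', .done (.tm (.var x'))) :: σ)) := by
  have hinitial : G.initial ℓ' = none := (hk.storeOK.initial_eq_none_iff ℓ').2 hℓ'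
  have hle : G ≤ G.alloc ℓ' (.done (.tm (.var x'))) := le_alloc hinitial _
  have hs' : .cache ℓ' ∉ .lamF x' :: .cache ℓ :: s := by
    have hne : ℓ' ≠ ℓ := by rintro rfl; simp [hℓ'] at hℓ
    simpa [hne, Conf.stack] using hk.cache_notMem hℓ'
  obtain ⟨_, hv, hs⟩ := hk.confOK
  have hv : G.initial ℓ = some (.pend x t e) := hv
  obtain ⟨he, hval⟩ := hk.coherent ℓ _ hv
  have hfresh : x' ∉ confFree (.cont σ (.abs x t e ℓ) s) := fun h => hx' (confFree_subset _ h)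
  have hclosed := abstr_clo_alloc_cons (x' := x') (t := t) he hinitial
    (fun h => hfresh (hk.mem_confFree ℓ (by simp [hv]) x' (hval ▸ h)))
  replace hs := hs.full_of_top harg hcache
  refine hk.simulates_of_alloc (sv := .done (.tm (.var x'))) hℓ' ⟨x', rfl⟩ rfl hs' ?_
    ⟨he.alloc_cons hinitial x nofun, .lamF ?_⟩ ?_
  · obtain ⟨rfl, rfl, rfl⟩ : x₀ = x ∧ t₀ = t ∧ e₀ = e := by
      rcases hk.storeOK.stored ℓ _ hℓ with h | ⟨_, ⟨⟩, -⟩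
      simpa [hv, eq_comm] using h
    have := storeFree_subset_cons_cache hℓ s
    have := storeFree_subset_cons hℓ' (.cache ℓ :: s) (.done (.tm (.var x')))
    have := cloFree_lam_subset x₀ t₀ e₀ ℓ'
    simp only [confFree, stackFree, storeFree_cons_lamF]
    grind [valFree, storableFree]
  · rw [hclosed]
    exact .cache ⟨.pend x t e, (hle _ _ hv).1, rfl, by rw [(hle _ _ hv).2, hval]; exact .refl⟩
      (hs.mono hle)
  · rw [conf, conf, plug, plug, hclosed]
    exact (plug_eq_of_le hle hs).symm ▸ .refl

theorem simulates_reuse (hk : G.Invariant (.cont σ (.abs x t e ℓ) s))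
    (hℓ : lookupL σ ℓ = some (.done v)) (harg : s.noArgTop) (hcache : s.noCacheTop) :
    G.Simulates (.cont σ (.abs x t e ℓ) s) (.cont σ v s) := by
  obtain ⟨_, hinitial, hs⟩ := hk.confOK
  obtain ⟨hv, hred⟩ : G.ValueOK .full v ∧ Reds .full (G.clo (.lam x t, e)) (G.value v) := by
    have hinitial : G.initial ℓ = some (.pend x t e) := hinitial
    rcases hk.storeOK.stored ℓ _ hℓ with h | ⟨_, ⟨⟩, κ, hv, sv, hsv, hkind, hred⟩
    · simp [hinitial] at h
    · obtain rfl : .pend x t e = sv := by simpa [hinitial] using hsv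
      obtain rfl : Kind.full = κ := by simpa [Storable.kind] using hkind
      rw [(hk.coherent ℓ _ hinitial).2] at hred
      exact ⟨hv, hred⟩
  obtain ⟨hs, hplug⟩ := (hs.full_of_top harg hcache).reds hred
  exact hk.simulates_of_storeOK hk.storeOK
    (Set.union_subset_union_left _ (Set.empty_subset _)) ⟨.full, hv, hs⟩ hplug

theorem simulates_arg (hk : G.Invariant (.cont σ (.tm t) (.arg c :: s))) :
    G.Simulates (.cont σ (.tm t) (.arg c :: s)) (.eval c (.appL t :: s) σ) := by
  obtain ⟨_, ht, hs⟩ := hk.confOK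
  cases hs with
  | arg hc hs =>
    refine hk.simulates_of_storeOK hk.storeOK ?_ ⟨hc, .appL ht hs⟩ .refl
    simp only [confFree, stackFree, storeFree_cons_arg, storeFree_cons_appL]
    grind [valFree]

theorem simulates_neutral_app (hk : G.Invariant (.cont σ (.tm t₂) (.appL t₁ :: s))) :
    G.Simulates (.cont σ (.tm t₂) (.appL t₁ :: s)) (.cont σ (.tm (.app t₁ t₂)) s) := by
  obtain ⟨_, ht₂, hs⟩ := hk.confOK
  cases hs with
  | appL ht₁ hs =>
    refine hk.simulates_of_storeOK hk.storeOK ?_ ⟨.bar, .app ht₁ ht₂.normalTm, hs⟩ .refl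
    simp only [confFree, stackFree, storeFree_cons_appL]
    grind [valFree, tmVars]

theorem simulates_close (hk : G.Invariant (.cont σ (.tm t) (.lamF x :: s))) :
    G.Simulates (.cont σ (.tm t) (.lamF x :: s)) (.cont σ (.tm (.lam x t)) s) := by
  obtain ⟨_, ht, hs⟩ := hk.confOK
  cases hs with
  | lamF hs =>
    have hval : G.value (.tm (.lam x t)) = (G.value (.tm t)).abstr x := Tm.interp_lam_var x t
    refine hk.simulates_of_storeOK hk.storeOK ?_ ⟨.full, .lam ht.normalTm, hval ▸ hs⟩
      (by rw [conf, conf, hval]; exact .refl)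
    simp only [confFree, stackFree, storeFree_cons_lamF]
    grind [valFree, tmVars]

end Invariant

theorem Invariant.simulates {r : ℕ} (hk : G.Invariant k) (h : Step r k k') : G.Simulates k k' := by
  cases h with
  | r1 => exact hk.simulates_app
  | r2 hℓ => exact hk.simulates_lam hℓ
  | r3 he hℓ => exact hk.simulates_force he hℓ
  | r4done he hℓ => exact hk.simulates_lookup_done he hℓ
  | r4free he => exact hk.simulates_lookup_free he
  | r5 => exact hk.simulates_memoize
  | r6 hℓ => exact hk.simulates_beta hℓ
  | r7 hℓ harg hcache hℓ' hx' => exact hk.simulates_open hℓ harg hcache hℓ' hx'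
  | r8 hℓ harg hcache => exact hk.simulates_reuse hℓ harg hcache
  | r9 => exact hk.simulates_arg
  | r10 => exact hk.simulates_neutral_app
  | r11 => exact hk.simulates_close

end Ghost

/-! ### Decoding -/

theorem initOf_append (H H' : List Conf) (ℓ : Loc) :
    initOf (H ++ H') ℓ =
      (initOf H ℓ).or ((initOf H' ℓ).map fun p => (H ++ p.1, p.2)) := by
  induction H with
  | nil => simp [initOf]
  | cons k H ih =>
    rw [List.cons_append, initOf, initOf, ih]
    cases lookupL k.store ℓ <;> cases initOf H ℓ <;> cases initOf H' ℓ <;> simp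

theorem prefix_of_initOf {H H' : List Conf} {ℓ : Loc} {sv : Storable}
    (h : initOf H ℓ = some (H', sv)) : H' <+: H := by
  induction H generalizing H' with
  | nil => cases h
  | cons k H ih =>
    rw [initOf] at h
    split at h
    · cases h
      exact List.prefix_append [k] H
    · obtain ⟨⟨H₁, _⟩, hH₁, ⟨⟩⟩ := Option.map_eq_some_iff.mp h
      exact List.cons_prefix_cons.mpr ⟨rfl, ih hH₁⟩

theorem lookupL_embEnv (e : Env) (x : Ident) : lookupL (embEnv e) x = (lookupL e x).map .inl := by
  induction e with
  | nil => rfl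
  | cons p e ih =>
    rw [embEnv] at ih ⊢
    by_cases hx : x = p.1 <;> simp [lookupL, hx, ih]

theorem Ctx.plug_comp {V : Type} (C D : Ctx V) (t : Tm V) :
    (C.comp D).plug t = C.plug (D.plug t) := by
  induction C with
  | hole => rfl
  | appL C u ih => simp only [comp, plug, ih]
  | appR u C ih => simp only [comp, plug, ih]
  | lam x C ih => simp only [comp, plug, ih]

theorem emb_interp_var (t : Tm Ident) : (emb t).interp .var = (t.interp .var).rename .inl := by
  rw [emb, Tm.interp_mapVar Sum.inl_injective, Tm.rename_interp]
  rfl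

namespace Ghost

open Nameless

variable {G : Ghost} {H H' : List Conf}

/-- The ghost records (at least) the allocations made in a history. -/
def Records (G : Ghost) (H : List Conf) : Prop :=
  ∀ ℓ H' sv, initOf H ℓ = some (H', sv) → G.initial ℓ = some sv

theorem Records.of_prefix (hG : G.Records H) (h : H' <+: H) : G.Records H' := by
  obtain ⟨H₂, rfl⟩ := h
  intro ℓ H₁ sv hℓ
  exact hG ℓ H₁ sv (by rw [initOf_append, hℓ]; rfl)

/-- The ghost records exactly the allocations made in a history. -/
def Tracks (G : Ghost) (H : List Conf) : Prop :=
  ∀ ℓ, G.initial ℓ = (initOf H ℓ).map Prod.snd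

theorem Tracks.records (hG : G.Tracks H) : G.Records H :=
  fun ℓ _ _ h => by rw [hG ℓ, h]; rfl

theorem Tracks.snoc (hG : G.Tracks H) {G' : Ghost} {k : Conf}
    (h : ∀ ℓ, G'.initial ℓ = (G.initial ℓ).or (lookupL k.store ℓ)) : G'.Tracks (H ++ [k]) := by
  intro ℓ
  rw [h, hG ℓ, initOf_append]
  cases initOf H ℓ <;> cases hk : lookupL k.store ℓ <;> simp [initOf, hk]

/-- The denotation of the identifiers in a decoding environment, if the free variables of the
decoded term denote `η`. -/
def denv {α : Type} (G : Ghost) (η : W → Nameless α) (e : DEnv) (x : Ident) : Nameless α :=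
  (lookupL e x).elim (η (.inl x)) (Sum.elim (fun ℓ => (G.val ℓ).subst (η ∘ .inl)) (η ∘ .inr))

theorem denv_embEnv {α : Type} (G : Ghost) (η : W → Nameless α) (e : Env) :
    G.denv η (embEnv e) = fun x => (G.env e x).subst (η ∘ .inl) := by
  funext x
  rw [denv, env, lookupL_embEnv]
  cases lookupL e x <;> rfl

theorem denv_liftEnv {α : Type} (G : Ghost) (η : W → Nameless α) {e : DEnv}
    (he : ∀ x y, lookupL e x = some (.inr y) → y = x) (x : Ident) :
    G.denv (liftEnv η (.inr x)) ((x, .inr x) :: e) = liftEnv (G.denv η e) x := by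
  have hinl : liftEnv η (.inr x) ∘ .inl = fun z => (η (.inl z)).rename some :=
    funext fun z => liftEnv_of_ne η Sum.inl_ne_inr
  funext y
  by_cases hyx : y = x
  · simp [denv, lookupL, hyx]
  · rw [liftEnv_of_ne _ hyx, denv, denv, lookupL, if_neg hyx, hinl]
    match hy : lookupL e y with
    | none => exact congrFun hinl y
    | some (.inl ℓ) => exact (rename_subst ..).symm
    | some (.inr z) =>
      obtain rfl := he y z hy
      exact liftEnv_of_ne η (Sum.inr_injective.ne hyx)

theorem interp_eq_of_decC {α : Type} (hG : G.Coherent) (hH : G.Records H) {t : Tm Ident}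
    {e : DEnv} {d : Tm W} (h : DecC H t e d) (he : ∀ x y, lookupL e x = some (.inr y) → y = x)
    (η : W → Nameless α) : d.interp η = t.interp (G.denv η e) := by
  induction h generalizing α with
  | app _ _ ih₁ ih₂ => rw [Tm.interp, Tm.interp, ih₁ hH he, ih₂ hH he]
  | @lam H x t e d _ ih =>
    have he' : ∀ y z, lookupL ((x, .inr x) :: e) y = some (.inr z) → z = y := by
      intro y z hyz
      rw [lookupL] at hyz
      split_ifs at hyz with hyx
      · cases hyz
        exact hyx.symm
      · exact he y z hyz
    rw [Tm.interp, Tm.interp, ih hH he', denv_liftEnv G η he]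
  | var_bar hx => simp [Tm.interp, denv, hx]
  | @var_arg H H' x e ℓ t₂ e₂ d hx hℓ _ ih =>
    have hval : G.val ℓ = G.clo (t₂, e₂) := (hG ℓ _ (hH ℓ _ _ hℓ)).2
    have he₂ : ∀ x y, lookupL (embEnv e₂) x = some (.inr y) → y = x := by
      simp [lookupL_embEnv]
    rw [ih (hH.of_prefix (prefix_of_initOf hℓ)) he₂, denv_embEnv, ← Tm.subst_interp]
    simp [Tm.interp, denv, hx, hval, clo]
  | @var_fresh H H' x x' e ℓ hx hℓ =>
    have hval : G.val ℓ = .var x' := (hG ℓ _ (hH ℓ _ _ hℓ)).2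
    simp [Tm.interp, denv, hx, hval, subst]
  | var_free hx => simp [Tm.interp, denv, hx]

theorem interp_eq_clo (hG : G.Coherent) (hH : G.Records H) {t : Tm Ident} {e : Env} {d : Tm W}
    (h : DecC H t (embEnv e) d) : d.interp .var = (G.clo (t, e)).rename .inl := by
  have he : ∀ x y, lookupL (embEnv e) x = some (.inr y) → y = x := by simp [lookupL_embEnv]
  rw [interp_eq_of_decC hG hH h he, denv_embEnv, ← Tm.subst_interp, subst_var_comp]
  rfl

theorem interp_eq_value (hG : G.Coherent) (hH : G.Records H) {v : Value} {d : Tm W}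
    (h : DecV H v d) : d.interp .var = (G.value v).rename .inl := by
  cases h with
  | tm => exact emb_interp_var _
  | abs h => exact interp_eq_clo hG hH h

theorem interp_eq_plug (hG : G.Coherent) (hH : G.Records H) {s : Stack} {C : Ctx W}
    (h : DecS H s C) {d : Tm W} {a : Nameless Ident} (hd : d.interp .var = a.rename .inl) :
    (C.plug d).interp .var = (G.plug s a).rename .inl := by
  induction h generalizing d a with
  | nil => exact hd
  | arg _ hc ih =>
    rw [Ctx.plug_comp]
    refine ih ?_
    rw [Ctx.plug, Ctx.plug, Tm.interp, hd, interp_eq_clo hG hH hc]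
    rfl
  | appL _ ih =>
    rw [Ctx.plug_comp]
    refine ih ?_
    rw [Ctx.plug, Ctx.plug, Tm.interp, hd, emb_interp_var]
    rfl
  | lamF _ ih =>
    rw [Ctx.plug_comp]
    refine ih ?_
    rw [Ctx.plug, Ctx.plug, Tm.interp_lam_var, hd, rename_abstr Sum.inl_injective]
  | cache _ ih => exact ih hd

theorem interp_eq_conf (hG : G.Coherent) (hH : G.Records H) {k : Conf} {d : Tm W}
    (h : DecK H k d) : d.interp .var = (G.conf k).rename .inl := by
  cases h with
  | eval hs hc => exact interp_eq_plug hG hH hs (interp_eq_clo hG hH hc)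
  | cont hs hv => exact interp_eq_plug hG hH hs (interp_eq_value hG hH hv)

theorem invariant_init (t : Tm Ident) (val : Loc → Nameless Ident) :
    Invariant ⟨fun _ => none, val⟩ (Conf.init t) where
  coherent := nofun
  storeOK := ⟨fun _ => ⟨fun _ => rfl, fun _ => rfl⟩, nofun⟩
  mem_confFree _ h := absurd rfl h
  confOK := ⟨nofun, .nil⟩

theorem exists_of_histFrom {t₀ : Tm Ident} {k : Conf} (h : HistFrom (Conf.init t₀) H k) :
    ∃ G : Ghost, G.Invariant k ∧ G.Tracks H ∧ Reds .full (t₀.interp .var) (G.conf k) := by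
  induction h with
  | refl => exact ⟨_, invariant_init t₀ fun _ => t₀.interp .var, fun ℓ => rfl, .refl⟩
  | step _ hstep ih =>
    obtain ⟨G, hk, hH, hred⟩ := ih
    obtain ⟨G', hinitial, hk', hred'⟩ := hk.simulates hstep
    exact ⟨G', hk', hH.snoc hinitial, hred.trans hred'⟩

end Ghost

/-- Step soundness of RKNL: any transition from a reachable configuration is
decoded to zero or more normal-order β-steps followed by an α-renaming;
consequently, if the machine started from `t0` halts with output term `t`, then
`t0` normal-order reduces to a term α-equivalent to `t`, and `t` is in β-normal
form. -/
theorem step_soundness :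
    (∀ (t0 : Tm Ident) (H : List Conf) (k k' : Conf) (r : ℕ) (d d' : Tm W),
        HistFrom (Conf.init t0) H k → Step r k k' →
        DecK H k d → DecK (H ++ [k']) k' d' →
        ∃ d'' : Tm W, Relation.ReflTransGen NOStep d d'' ∧ AlphaEq d'' d') ∧
    (∀ (t0 : Tm Ident) (H : List Conf) (σ : Store) (t : Tm Ident),
        HistFrom (Conf.init t0) H (.cont σ (.tm t) []) →
        (∀ (r : ℕ) (k' : Conf), ¬ Step r (Conf.cont σ (.tm t) []) k') →
        BetaNormal t ∧
        ∃ t' : Tm W, Relation.ReflTransGen NOStep (emb t0) t' ∧ AlphaEq t' (emb t)) := by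
  refine ⟨fun t₀ H k k' r d d' hH hstep hd hd' => ?_, fun t₀ H σ t hH _ => ?_⟩
  · obtain ⟨G, hk, htracks, -⟩ := Ghost.exists_of_histFrom hH
    obtain ⟨G', hinitial, hk', hred⟩ := hk.simulates hstep
    apply exists_noSteps_alphaEq
    rw [Ghost.interp_eq_conf hk.coherent htracks.records hd,
      Ghost.interp_eq_conf hk'.coherent (htracks.snoc hinitial).records hd']
    exact hred.rename Sum.inl
  · obtain ⟨G, hk, -, hred⟩ := Ghost.exists_of_histFrom hH
    obtain ⟨κ, ht, -⟩ := hk.confOK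
    refine ⟨NormalTm.betaNormal (Kind.IsNormal.normalTm ht), exists_noSteps_alphaEq ?_⟩
    rw [emb_interp_var, emb_interp_var]
    exact hred.rename Sum.inl

end RKNL
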